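/- arXiv:0803.0156 — 3 statements merged into one kernel-verified Lean document; each statement's English description precedes it below -/
import Mathlib

section
/- Let g(s) denote the winning probability of the greedy strategy in the full game (number of rounds equal to the total number of cards) on the deck of composition s. If q is obtained from s = (s₁,…,s_v) by inserting an extra value with s_{v+1} cards, then g(q) ≥ g(s); moreover, if all entries of s are positive and s_{v+1} ≥ 1, the inequality is strict. -/
/-- The deck of composition `s` as a list of card values:
`s[i]` copies of value `i+1`, in a canonical order. -/
def deckList (s : List ℕ) : List ℕ :=
  (List.range s.length).flatMap fun i => List.replicate (s.getD i 0) (i + 1)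

/-- `winsAux strat hist m d = true` iff the player using adaptive strategy `strat`
(a function from the list of previously revealed cards to the next bid)
survives `m` rounds when the remaining deck order is `d`, having already seen `hist`. -/
def winsAux (strat : List ℕ → ℕ) : List ℕ → ℕ → List ℕ → Bool
  | _, 0, _ => true
  | _, _ + 1, [] => true
  | hist, m + 1, c :: rest =>
      (strat hist != c) && winsAux strat (hist ++ [c]) m rest

/-- Probability that strategy `strat` wins the `m`-round game against the uniformly
shuffled `s`-deck: the fraction of the `c!` orderings of the deck on which it wins. -/
def winProb (strat : List ℕ → ℕ) (s : List ℕ) (m : ℕ) : ℚ :=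
  (((deckList s).permutations.countP fun d => winsAux strat [] m d) : ℚ)
    / ((deckList s).length.factorial : ℚ)

/-- Number of cards of value `i` remaining from the `s`-deck after the cards in `hist`
have been dealt. -/
def remCount (s : List ℕ) (hist : List ℕ) (i : ℕ) : ℕ :=
  s.getD (i - 1) 0 - hist.count i

/-- The canonical greedy strategy for the `s`-deck: name a least frequent remaining value. -/
def greedyStrat (s : List ℕ) (hist : List ℕ) : ℕ :=
  (((List.range' 1 s.length)).argmin (remCount s hist)).getD 1

/-- `g m s`: the probability that the greedy strategy wins the `m`-round `s`-game. -/
def g (m : ℕ) (s : List ℕ) : ℚ :=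
  winProb (greedyStrat s) s m

/-- `gFull s`: greedy winning probability when all cards are dealt. -/
def gFull (s : List ℕ) : ℚ :=
  g (deckList s).length s

/-- The strategy naming, in order, value `1` `b 1` times, value `2` `b 2` times, etc. -/
def bidStrat (b : List ℕ) (hist : List ℕ) : ℕ :=
  (deckList b).getD hist.length 0

/-- `advProb b s`: winning probability of the advance bid vector `b` against the `s`-deck. -/
def advProb (b s : List ℕ) : ℚ :=
  winProb (bidStrat b) s b.sum

/-- `s` majorizes `q`: every partial sum of `s` is at least that of `q`. -/
def Majorizes (s q : List ℕ) : Prop :=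
  ∀ i, (q.take i).sum ≤ (s.take i).sum

/-- `Pfun s q = ∏_{i : sᵢ > qᵢ} sᵢ (sᵢ-1) ⋯ (qᵢ+1) = ∏_{i : sᵢ > qᵢ} sᵢ!/qᵢ!`. -/
def Pfun (s q : List ℕ) : ℕ :=
  (List.zipWith (fun a b => if b < a then a.factorial / b.factorial else 1) s q).prod

/-- `s` with its `i`-th entry decreased by `1`, re-sorted non-increasingly. -/
def downAt (s : List ℕ) (i : ℕ) : List ℕ :=
  ((s.set i (s.getD i 0 - 1)).mergeSort fun a b => decide (b ≤ a))

/-- `strat` plays greedily at position `hist`. -/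
def GreedyAt (s : List ℕ) (strat : List ℕ → ℕ) (hist : List ℕ) : Prop :=
  strat hist ∈ List.range' 1 s.length ∧
    ∀ j ∈ List.range' 1 s.length, remCount s hist (strat hist) ≤ remCount s hist j

/-- `strat` plays anti-greedily at `hist`: it names a most frequent remaining value. -/
def AntiGreedyAt (s : List ℕ) (strat : List ℕ → ℕ) (hist : List ℕ) : Prop :=
  strat hist ∈ List.range' 1 s.length ∧
    ∀ j ∈ List.range' 1 s.length, remCount s hist j ≤ remCount s hist (strat hist)

/-- `hist` is a position reachable with positive probability by `strat` in the `m`-round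
`s`-game: it is part of the deck, fewer than `m` cards have been dealt, and `strat`
survived all rounds so far. -/
def Reachable (strat : List ℕ → ℕ) (s : List ℕ) (m : ℕ) (hist : List ℕ) : Prop :=
  hist.length < m ∧ List.Subperm hist (deckList s) ∧ winsAux strat [] hist.length hist = true

/-- Binomial coefficient with integer lower index (zero when the lower index is negative). -/
def zchoose (n : ℕ) (k : ℤ) : ℕ :=
  if 0 ≤ k then n.choose k.toNat else 0

/-!
Count winning deals with all cards distinguishable. Optimal play then satisfies a recursion on the
next card dealt, and exchanging the next two cards in that recursion shows that, at each step, the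
values of least multiplicity are the least costly to name; so the greedy strategy attains the
optimum. In the deck with `x` extra cards, a player who ignores those cards and names what is
optimal for the rest of the deck survives at least as often as in the original deck.

The inequality is strict for `x = 0`, since naming an absent value always wins whereas any first bid
from an all-positive deck may lose. For larger `x` the strictness is inherited through the event
that the first card dealt is one of the extra cards.
-/

section OptimalPlay

open Finset

variable {ι κ : Type*} [DecidableEq ι] [DecidableEq κ]

/-- The composition `s` after one card of value `c` is dealt. It leaves `s` unchanged if no such
card remains; wherever it is used the weight `s c` makes that case contribute `0`. -/
def removeCard (s : ι → ℕ) (c : ι) : ι → ℕ :=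
  s - Pi.single c 1

theorem removeCard_apply (s : ι → ℕ) (c i : ι) :
    removeCard s c i = if i = c then s i - 1 else s i := by
  simp only [removeCard, Pi.sub_apply, Pi.single_apply]
  split_ifs <;> rfl

theorem removeCard_comp_equiv (s : κ → ℕ) (e : ι ≃ κ) (c : ι) :
    removeCard (s ∘ e) c = removeCard s (e c) ∘ e := by
  ext i
  simp [removeCard_apply]

theorem removeCard_eq_comp_swap {s : ι → ℕ} {i j : ι} (h : s i = s j) :
    removeCard s i = removeCard s j ∘ Equiv.swap i j := by
  ext c
  simp only [Function.comp_apply, removeCard_apply]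
  grind

theorem removeCard_comm (s : ι → ℕ) (i j : ι) :
    removeCard (removeCard s i) j = removeCard (removeCard s j) i :=
  tsub_right_comm

theorem mul_removeCard_comm (s : ι → ℕ) (i j : ι) :
    s i * removeCard s i j = s j * removeCard s j i := by
  obtain rfl | hij := eq_or_ne i j
  · rfl
  · simp [removeCard_apply, hij, hij.symm, mul_comm]

variable [Fintype ι] [Fintype κ]

/-- The number of ways to deal `k` cards in order from a deck with `s c` distinguishable cards of
each value `c` such that optimal play survives: of the possible next cards, naming `m` loses to
exactly those of value `m`. -/
def optWins : ℕ → (ι → ℕ) → ℕ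
  | 0, _ => 1
  | k + 1, s => univ.sup fun m => ∑ c ∈ univ.erase m, s c * optWins k (removeCard s c)

theorem sum_erase_le_optWins (k : ℕ) (s : ι → ℕ) (m : ι) :
    ∑ c ∈ univ.erase m, s c * optWins k (removeCard s c) ≤ optWins (k + 1) s :=
  le_sup (f := fun m => ∑ c ∈ univ.erase m, s c * optWins k (removeCard s c)) (mem_univ m)

theorem exists_optWins_eq_sum_erase [Nonempty ι] (k : ℕ) (s : ι → ℕ) :
    ∃ m, optWins (k + 1) s = ∑ c ∈ univ.erase m, s c * optWins k (removeCard s c) := by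
  obtain ⟨m, -, hm⟩ := exists_mem_eq_sup univ univ_nonempty
    fun m : ι => ∑ c ∈ univ.erase m, s c * optWins k (removeCard s c)
  exact ⟨m, hm⟩

theorem optWins_comp_equiv (k : ℕ) (s : κ → ℕ) (e : ι ≃ κ) :
    optWins k (s ∘ e) = optWins k s := by
  induction k generalizing s with
  | zero => rfl
  | succ k ih =>
    simp only [optWins, removeCard_comp_equiv, ih]
    rw [← univ_map_equiv_to_embedding e, sup_map]
    exact sup_congr rfl fun m _ => sum_equiv e (by simp) fun c _ => rfl

theorem mul_mul_optWins_removeCard_comm (k : ℕ) (s : ι → ℕ) (i j : ι) :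
    s i * (removeCard s i j * optWins k (removeCard (removeCard s i) j)) =
      s j * (removeCard s j i * optWins k (removeCard (removeCard s j) i)) := by
  rw [← mul_assoc, mul_removeCard_comm, mul_assoc, removeCard_comm]

-- If `s j < s i`, removing any second card `c` leaves at most as many `j`s as `i`s; dealing `c`
-- first therefore reduces the claim to the induction hypothesis for `removeCard s c`.
theorem mul_optWins_removeCard_le (k : ℕ) {s : ι → ℕ} {i j : ι} (h : s j ≤ s i) :
    s j * optWins k (removeCard s j) ≤ s i * optWins k (removeCard s i) := by
  induction k generalizing s with
  | zero => simpa [optWins] using h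
  | succ k ih =>
    obtain heq | hlt := h.eq_or_lt
    · rw [removeCard_eq_comp_swap heq, optWins_comp_equiv, heq]
    have : Nonempty ι := ⟨i⟩
    obtain ⟨m, hm⟩ := exists_optWins_eq_sum_erase k (removeCard s j)
    have hle (c : ι) : removeCard s c j ≤ removeCard s c i := by
      grind [removeCard_apply]
    calc s j * optWins (k + 1) (removeCard s j)
        = ∑ c ∈ univ.erase m,
            s c * (removeCard s c j * optWins k (removeCard (removeCard s c) j)) := by
          simp only [hm, mul_sum, mul_mul_optWins_removeCard_comm k s j]
      _ ≤ ∑ c ∈ univ.erase m,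
            s c * (removeCard s c i * optWins k (removeCard (removeCard s c) i)) :=
          sum_le_sum fun c _ => Nat.mul_le_mul_left _ (ih (hle c))
      _ = s i * ∑ c ∈ univ.erase m,
            removeCard s i c * optWins k (removeCard (removeCard s i) c) := by
          simp only [mul_sum, mul_mul_optWins_removeCard_comm k s i]
      _ ≤ s i * optWins (k + 1) (removeCard s i) :=
          Nat.mul_le_mul_left _ (sum_erase_le_optWins k _ m)

theorem optWins_succ_of_forall_le (k : ℕ) {s : ι → ℕ} {m : ι} (hm : ∀ c, s m ≤ s c) :
    optWins (k + 1) s = ∑ c ∈ univ.erase m, s c * optWins k (removeCard s c) := by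
  refine le_antisymm (Finset.sup_le fun m' _ => ?_) (sum_erase_le_optWins k s m)
  have hm' := mul_optWins_removeCard_le k (hm m')
  have hsum := sum_erase_add univ (fun c => s c * optWins k (removeCard s c)) (mem_univ m)
  have hsum' := sum_erase_add univ (fun c => s c * optWins k (removeCard s c)) (mem_univ m')
  lia

theorem sum_removeCard {s : ι → ℕ} {c : ι} (hc : s c ≠ 0) :
    ∑ i, removeCard s c i = ∑ i, s i - 1 := by
  have hle : Pi.single c 1 ≤ s := fun i => by
    by_cases hi : i = c <;> simp [hi, Nat.one_le_iff_ne_zero, hc]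
  simp [removeCard, sum_tsub_distrib _ fun i _ => hle i]

theorem descFactorial_succ_eq_mul_pred (n k : ℕ) :
    n.descFactorial (k + 1) = n * (n - 1).descFactorial k := by
  cases n with
  | zero => simp
  | succ n => exact Nat.succ_descFactorial_succ n k

theorem sum_erase_mul_descFactorial (k : ℕ) (s : ι → ℕ) (m : ι) :
    ∑ c ∈ univ.erase m, s c * (∑ i, removeCard s c i).descFactorial k =
      (∑ c ∈ univ.erase m, s c) * (∑ i, s i - 1).descFactorial k := by
  rw [sum_mul]
  refine sum_congr rfl fun c _ => ?_
  obtain hc | hc := eq_or_ne (s c) 0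
  · simp [hc]
  · rw [sum_removeCard hc]

theorem optWins_le_descFactorial (k : ℕ) (s : ι → ℕ) :
    optWins k s ≤ (∑ i, s i).descFactorial k := by
  induction k generalizing s with
  | zero => simp [optWins]
  | succ k ih =>
    refine Finset.sup_le fun m _ => ?_
    calc ∑ c ∈ univ.erase m, s c * optWins k (removeCard s c)
        ≤ ∑ c ∈ univ.erase m, s c * (∑ i, removeCard s c i).descFactorial k :=
          sum_le_sum fun c _ => Nat.mul_le_mul_left _ (ih _)
      _ = (∑ c ∈ univ.erase m, s c) * (∑ i, s i - 1).descFactorial k :=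
          sum_erase_mul_descFactorial k s m
      _ ≤ (∑ i, s i) * (∑ i, s i - 1).descFactorial k := by
          gcongr
          exact erase_subset m univ
      _ = (∑ i, s i).descFactorial (k + 1) := (descFactorial_succ_eq_mul_pred _ k).symm

theorem descFactorial_le_optWins_of_eq_zero (k : ℕ) {s : ι → ℕ} {m : ι} (hm : s m = 0) :
    (∑ i, s i).descFactorial k ≤ optWins k s := by
  induction k generalizing s with
  | zero => simp [optWins]
  | succ k ih =>
    calc (∑ i, s i).descFactorial (k + 1)
        = (∑ c ∈ univ.erase m, s c) * (∑ i, s i - 1).descFactorial k := by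
          rw [sum_erase univ hm, descFactorial_succ_eq_mul_pred]
      _ = ∑ c ∈ univ.erase m, s c * (∑ i, removeCard s c i).descFactorial k :=
          (sum_erase_mul_descFactorial k s m).symm
      _ ≤ ∑ c ∈ univ.erase m, s c * optWins k (removeCard s c) :=
          sum_le_sum fun c _ => Nat.mul_le_mul_left _ (ih (by simp [removeCard_apply, hm]))
      _ ≤ optWins (k + 1) s := sum_erase_le_optWins k s m

theorem optWins_lt_descFactorial {k : ℕ} (hk : k ≠ 0) {s : ι → ℕ} (hks : k ≤ ∑ i, s i)
    (hs : ∀ i, 0 < s i) : optWins k s < (∑ i, s i).descFactorial k := by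
  obtain ⟨k, rfl⟩ := Nat.exists_eq_succ_of_ne_zero hk
  have hpos : 0 < (∑ i, s i).descFactorial (k + 1) := Nat.descFactorial_pos.2 hks
  refine (Finset.sup_lt_iff hpos).2 fun m _ => ?_
  calc ∑ c ∈ univ.erase m, s c * optWins k (removeCard s c)
      ≤ ∑ c ∈ univ.erase m, s c * (∑ i, removeCard s c i).descFactorial k :=
        sum_le_sum fun c _ => Nat.mul_le_mul_left _ (optWins_le_descFactorial k _)
    _ = (∑ c ∈ univ.erase m, s c) * (∑ i, s i - 1).descFactorial k :=
        sum_erase_mul_descFactorial k s m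
    _ < (∑ i, s i) * (∑ i, s i - 1).descFactorial k := by
        gcongr
        · exact Nat.descFactorial_pos.2 (by lia)
        · exact sum_lt_sum_of_subset (erase_subset m univ) (mem_univ m) (notMem_erase m univ) (hs m)
            fun _ _ _ => Nat.zero_le _
    _ = (∑ i, s i).descFactorial (k + 1) := (descFactorial_succ_eq_mul_pred _ k).symm

end OptimalPlay

section InsertValue

open Finset Nat

/-- The composition `s` with an extra value, indexed by `none`, of which there are `x` cards. -/
def insertValue {ι : Type*} (x : ℕ) (s : ι → ℕ) : Option ι → ℕ :=
  fun c => c.elim x s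

variable {ι : Type*} [DecidableEq ι]

theorem removeCard_insertValue_some (x : ℕ) (s : ι → ℕ) (c : ι) :
    removeCard (insertValue x s) (some c) = insertValue x (removeCard s c) := by
  ext (_ | i) <;> simp [insertValue, removeCard_apply]

theorem removeCard_insertValue_none (x : ℕ) (s : ι → ℕ) :
    removeCard (insertValue x s) none = insertValue (x - 1) s := by
  ext (_ | i) <;> simp [insertValue, removeCard_apply]

variable [Fintype ι]

theorem sum_erase_add_le_optWins_insertValue (k x : ℕ) (s : ι → ℕ) (m : ι) :
    ∑ c ∈ univ.erase m, s c * optWins k (insertValue x (removeCard s c)) +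
      x * optWins k (insertValue (x - 1) s) ≤ optWins (k + 1) (insertValue x s) := by
  have key := sum_erase_le_optWins k (insertValue x s) (some m)
  have : (univ : Finset (Option ι)).erase (some m) = insertNone (univ.erase m) := by
    ext (_ | i) <;> simp
  rw [this, sum_insertNone, removeCard_insertValue_none] at key
  simp only [removeCard_insertValue_some] at key
  simpa [insertValue, add_comm] using key

variable [Nonempty ι]

theorem factorial_le_optWins_insertValue (x : ℕ) (s : ι → ℕ) :
    x ! ≤ optWins x (insertValue x s) := by
  induction x with
  | zero => simp [optWins]
  | succ x ih =>
    have key := sum_erase_add_le_optWins_insertValue x (x + 1) s (Classical.arbitrary ι)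
    calc (x + 1)! ≤ (x + 1) * optWins x (insertValue x s) := Nat.mul_le_mul_left _ ih
      _ ≤ optWins (x + 1) (insertValue (x + 1) s) := (Nat.le_add_left _ _).trans key

theorem add_le_factorial_mul_optWins_insertValue {k x : ℕ} {s : ι → ℕ}
    (h : ∀ c, (x + k)! * optWins k (removeCard s c) ≤
      k ! * optWins (x + k) (insertValue x (removeCard s c))) :
    (k + 1) * ((x + k)! * optWins (k + 1) s) +
      x * ((k + 1)! * optWins (x + k) (insertValue (x - 1) s)) ≤
        (k + 1)! * optWins (x + (k + 1)) (insertValue x s) := by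
  obtain ⟨m, hm⟩ := exists_optWins_eq_sum_erase k s
  have hold : (k + 1) * ((x + k)! * optWins (k + 1) s) ≤
      (k + 1)! * ∑ c ∈ univ.erase m, s c * optWins (x + k) (insertValue x (removeCard s c)) :=
    calc (k + 1) * ((x + k)! * optWins (k + 1) s)
        = (k + 1) * ∑ c ∈ univ.erase m, s c * ((x + k)! * optWins k (removeCard s c)) := by
          simp only [hm, mul_sum, mul_left_comm]
      _ ≤ (k + 1) * ∑ c ∈ univ.erase m,
            s c * (k ! * optWins (x + k) (insertValue x (removeCard s c))) := by
          gcongr (k + 1) * ∑ c ∈ _, s c * ?_ with c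
          exact h c
      _ = _ := by
          simp only [factorial_succ, mul_sum, mul_left_comm, mul_assoc]
  calc (k + 1) * ((x + k)! * optWins (k + 1) s) +
        x * ((k + 1)! * optWins (x + k) (insertValue (x - 1) s))
      ≤ (k + 1)! * (∑ c ∈ univ.erase m, s c * optWins (x + k) (insertValue x (removeCard s c)) +
          x * optWins (x + k) (insertValue (x - 1) s)) := by
        rw [mul_add, mul_left_comm x]
        gcongr
    _ ≤ (k + 1)! * optWins (x + (k + 1)) (insertValue x s) :=
        Nat.mul_le_mul_left _ (sum_erase_add_le_optWins_insertValue (x + k) x s m)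

theorem factorial_add_succ_mul (x k w : ℕ) :
    (x + (k + 1))! * w = (k + 1) * ((x + k)! * w) + x * ((x + k)! * w) := by
  rw [← add_assoc, factorial_succ]
  ring

theorem factorial_mul_optWins_le_insertValue (k x : ℕ) (s : ι → ℕ) :
    (x + k)! * optWins k s ≤ k ! * optWins (x + k) (insertValue x s) := by
  induction k generalizing x s with
  | zero => simpa [optWins] using factorial_le_optWins_insertValue x s
  | succ k ihk =>
    have step (x : ℕ) :=
      add_le_factorial_mul_optWins_insertValue fun c => ihk x (removeCard s c)
    induction x with
    | zero => simpa [factorial_succ, mul_assoc] using step 0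
    | succ x ihx =>
      rw [factorial_add_succ_mul]
      refine le_trans ?_ (step (x + 1))
      rw [Nat.succ_add_eq_add_succ]
      exact Nat.add_le_add_left (Nat.mul_le_mul_left _ ihx) _

theorem factorial_mul_optWins_lt_insertValue {k : ℕ} (hk : k ≠ 0) (x : ℕ) {s : ι → ℕ}
    (hks : k ≤ ∑ i, s i) (hs : ∀ i, 0 < s i) :
    (x + k)! * optWins k s < k ! * optWins (x + k) (insertValue x s) := by
  induction x with
  | zero =>
    have hsum : ∑ c, insertValue 0 s c = ∑ i, s i := by simp [insertValue]
    rw [zero_add]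
    gcongr
    calc optWins k s < (∑ i, s i).descFactorial k := optWins_lt_descFactorial hk hks hs
      _ = (∑ c, insertValue 0 s c).descFactorial k := by rw [hsum]
      _ ≤ optWins k (insertValue 0 s) := descFactorial_le_optWins_of_eq_zero k (m := none) rfl
  | succ x ih =>
    obtain ⟨k, rfl⟩ := Nat.exists_eq_succ_of_ne_zero hk
    rw [factorial_add_succ_mul]
    refine lt_of_lt_of_le ?_ (add_le_factorial_mul_optWins_insertValue fun c =>
      factorial_mul_optWins_le_insertValue k (x + 1) (removeCard s c))
    rw [Nat.succ_add_eq_add_succ]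
    exact Nat.add_lt_add_left ((Nat.mul_lt_mul_left x.succ_pos).2 ih) _

end InsertValue

section Permutations

open List

variable {α : Type*}

-- The first entry of a permutation of `a :: l` is either `a` or the first entry of the underlying
-- permutation of `l`.
theorem permutations'_cons_perm (a : α) (l : List α) :
    permutations' (a :: l) ~
      (permutations' l).map (a :: ·) ++
        (permutations' l).flatMap fun w =>
          w.head?.toList.flatMap fun c => (permutations'Aux a w.tail).map (c :: ·) := by
  refine Perm.trans (Perm.flatMap_left _ fun w _ => ?_) (map_append_flatMap_perm _ _ _).symm
  cases w <;> simp

variable [DecidableEq α]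

theorem cons_erase_perm {l : List α} {c : α} (hc : c ∈ l) (a : α) :
    a :: l.erase c ~ (a :: l).erase c := by
  simpa using (((perm_cons_erase hc).cons a).trans (Perm.swap c a _)).symm.erase c

theorem permutations'_perm_flatMap_erase {l : List α} (hl : l ≠ []) :
    permutations' l ~ l.flatMap fun c => (permutations' (l.erase c)).map (c :: ·) := by
  induction l with
  | nil => contradiction
  | cons a l ih =>
    refine (permutations'_cons_perm a l).trans ?_
    rw [flatMap_cons, erase_cons_head]
    refine Perm.append_left _ ?_
    obtain rfl | hl := eq_or_ne l []
    · simp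
    refine ((ih hl).flatMap_right _).trans ?_
    rw [flatMap_assoc]
    refine Perm.flatMap_left _ fun c hc => ?_
    simpa [flatMap_map, ← map_flatMap] using (cons_erase_perm hc a).permutations'.map (c :: ·)

theorem countP_permutations (p : List α → Bool) {l : List α} (hl : l ≠ []) :
    l.permutations.countP p =
      (l.map fun c => (l.erase c).permutations.countP fun w => p (c :: w)).sum := by
  simp only [(permutations_perm_permutations' _).countP_eq]
  rw [(permutations'_perm_flatMap_erase hl).countP_eq, countP_flatMap]
  simp [Function.comp_def]

theorem sum_map_eq_sum_count_mul {ι : Type*} [Fintype ι] {e : ι → α} (he : Function.Injective e)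
    {l : List α} (hl : ∀ a ∈ l, a ∈ Set.range e) (f : α → ℕ) :
    (l.map f).sum = ∑ i, l.count (e i) * f (e i) := by
  have hsub : l.toFinset ⊆ Finset.univ.image e := fun a ha => by
    simpa using hl a (mem_toFinset.1 ha)
  rw [Finset.sum_list_map_count, Finset.sum_subset hsub, Finset.sum_image he.injOn]
  · rfl
  · intro a _ ha
    simp [count_eq_zero_of_not_mem (mt mem_toFinset.2 ha)]

end Permutations

section GreedyStrategy

theorem count_deckList (s : List ℕ) (i : Fin s.length) :
    (deckList s).count (i + 1 : ℕ) = s.get i := by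
  have hcount : (List.count (i + 1 : ℕ) ∘ fun j => List.replicate (s.getD j 0) (j + 1)) =
      fun j => if j = (i : ℕ) then s.getD j 0 else 0 := by
    ext j
    simp [List.count_replicate]
  rw [deckList, List.count_flatMap, hcount]
  change ∑ j ∈ Finset.range s.length, (if j = (i : ℕ) then s.getD j 0 else 0) = s.get i
  simp

theorem length_deckList (s : List ℕ) : (deckList s).length = s.sum := by
  simp only [deckList, List.length_flatMap, List.length_replicate]
  change ∑ i ∈ Finset.range s.length, s.getD i 0 = s.sum
  simp [Finset.sum_range]

theorem mem_range_of_mem_deckList {s : List ℕ} {c : ℕ} (hc : c ∈ deckList s) :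
    c ∈ Set.range fun i : Fin s.length => (i + 1 : ℕ) := by
  simp only [deckList, List.mem_flatMap, List.mem_range, List.mem_replicate] at hc
  obtain ⟨i, hi, -, rfl⟩ := hc
  exact ⟨⟨i, hi⟩, rfl⟩

theorem remCount_eq_count {s hist d : List ℕ} (h : (hist ++ d).Perm (deckList s))
    (i : Fin s.length) : remCount s hist (i + 1) = d.count (i + 1 : ℕ) := by
  have hcount := h.count_eq (i + 1 : ℕ)
  rw [count_deckList, List.count_append, List.get_eq_getElem] at hcount
  simp [remCount, ← hcount]

theorem exists_greedyStrat_eq {s : List ℕ} (hs : s ≠ []) (hist : List ℕ) :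
    ∃ m : Fin s.length, greedyStrat s hist = m + 1 ∧
      ∀ i : Fin s.length, remCount s hist (m + 1) ≤ remCount s hist (i + 1) := by
  obtain ⟨v, hv⟩ : ∃ v, (List.range' 1 s.length).argmin (remCount s hist) = some v := by
    rw [← Option.ne_none_iff_exists', ne_eq, List.argmin_eq_none]
    simpa using hs
  have hmem := List.mem_range'_1.1 (List.argmin_mem hv)
  obtain ⟨m, rfl⟩ : ∃ m, v = m + 1 := ⟨v - 1, by lia⟩
  refine ⟨⟨m, by lia⟩, by simp [greedyStrat, hv], fun i => ?_⟩
  exact List.le_of_mem_argmin (List.mem_range'_1.2 (by lia)) hv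

theorem countP_winsAux_succ (strat : List ℕ → ℕ) (hist : List ℕ) (k : ℕ) {d : List ℕ}
    (hd : d ≠ []) :
    d.permutations.countP (winsAux strat hist (k + 1)) =
      (d.map fun c => if c = strat hist then 0 else
        (d.erase c).permutations.countP (winsAux strat (hist ++ [c]) k)).sum := by
  rw [countP_permutations _ hd]
  congr! with c
  by_cases hc : c = strat hist
  · simp [winsAux, hc]
  · have hne : (strat hist != c) = true := bne_iff_ne.2 (Ne.symm hc)
    simp [winsAux, hc, hne]

theorem count_erase_eq_removeCard (d : List ℕ) {n : ℕ} (c : Fin n) :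
    (fun i : Fin n => (d.erase (c + 1)).count (i + 1 : ℕ)) =
      removeCard (fun i : Fin n => d.count (i + 1 : ℕ)) c := by
  ext i
  obtain rfl | hic := eq_or_ne i c
  · simp [removeCard_apply]
  · have hne : (i + 1 : ℕ) ≠ c + 1 := by simpa [Fin.ext_iff] using hic
    rw [List.count_erase_of_ne hne, removeCard_apply, if_neg hic]

theorem countP_winsAux_greedyStrat {s : List ℕ} (hs : s ≠ []) {k : ℕ} {hist d : List ℕ}
    (hk : d.length = k) (h : (hist ++ d).Perm (deckList s)) :
    d.permutations.countP (winsAux (greedyStrat s) hist k) =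
      optWins k fun i : Fin s.length => d.count (i + 1 : ℕ) := by
  induction k generalizing hist d with
  | zero => simp [List.length_eq_zero_iff.1 hk, winsAux, optWins]
  | succ k ih =>
    obtain ⟨m, hm, hmin⟩ := exists_greedyStrat_eq hs hist
    have hd : d ≠ [] := List.ne_nil_of_length_eq_add_one hk
    have hrange (c : ℕ) (hc : c ∈ d) : c ∈ Set.range fun i : Fin s.length => (i + 1 : ℕ) :=
      mem_range_of_mem_deckList (h.subset (List.mem_append_right _ hc))
    simp only [remCount_eq_count h] at hmin
    rw [countP_winsAux_succ _ _ _ hd, optWins_succ_of_forall_le k hmin,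
      sum_map_eq_sum_count_mul (fun i j hij => Fin.ext (Nat.succ_injective hij)) hrange, hm,
      ← Finset.sum_erase Finset.univ (a := m) (by simp)]
    refine Finset.sum_congr rfl fun c hc => ?_
    obtain hc0 | hc0 := eq_or_ne (d.count (c + 1 : ℕ)) 0
    · simp [hc0]
    have hmem : (c + 1 : ℕ) ∈ d := List.count_pos_iff.1 (Nat.pos_of_ne_zero hc0)
    have hdeal : (hist ++ [(c + 1 : ℕ)] ++ d.erase (c + 1)).Perm (deckList s) := by
      rw [List.append_assoc]
      exact ((List.perm_cons_erase hmem).symm.append_left hist).trans h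
    rw [if_neg (by simpa [Fin.ext_iff] using Finset.ne_of_mem_erase hc),
      ih (by simp [List.length_erase_of_mem hmem, hk]) hdeal, count_erase_eq_removeCard]

theorem gFull_eq_optWins_div {s : List ℕ} (hs : s ≠ []) :
    gFull s = optWins s.sum s.get / (s.sum.factorial : ℚ) := by
  have hcount := countP_winsAux_greedyStrat hs (length_deckList s)
    (hist := []) (List.Perm.refl (deckList s))
  simp only [count_deckList] at hcount
  rw [gFull, g, winProb, length_deckList, hcount]

theorem exists_get_eq_get_comp_equiv {α : Type*} {s t : List α} (h : s.Perm t) :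
    ∃ e : Fin s.length ≃ Fin t.length, s.get = t.get ∘ e := by
  classical
  exact ⟨⟨h.idxBij, h.symm.idxBij, h.idxBij_rightInverse_idxBij_symm,
    h.idxBij_leftInverse_idxBij_symm⟩, funext fun i => (h.getElem_idxBij_eq_getElem i).symm⟩

theorem gFull_perm {s t : List ℕ} (h : s.Perm t) : gFull s = gFull t := by
  obtain rfl | ht := eq_or_ne t []
  · rw [h.eq_nil]
  have hs : s ≠ [] := fun hs => ht (by simpa [hs] using h)
  obtain ⟨e, he⟩ := exists_get_eq_get_comp_equiv h
  rw [gFull_eq_optWins_div hs, gFull_eq_optWins_div ht, h.sum_eq, he, optWins_comp_equiv]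

theorem gFull_cons_eq_optWins_div (x : ℕ) (s : List ℕ) :
    gFull (x :: s) =
      optWins (x + s.sum) (insertValue x s.get) / ((x + s.sum).factorial : ℚ) := by
  have hget : (x :: s).get = insertValue x s.get ∘ finSuccEquiv s.length := by
    funext i
    cases i using Fin.cases <;> simp [insertValue]
  rw [gFull_eq_optWins_div (List.cons_ne_nil x s), List.sum_cons, hget, optWins_comp_equiv]

theorem gFull_le_gFull_cons {s : List ℕ} (hs : s ≠ []) (x : ℕ) : gFull s ≤ gFull (x :: s) := by
  have : NeZero s.length := ⟨by simpa using hs⟩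
  rw [gFull_eq_optWins_div hs, gFull_cons_eq_optWins_div,
    div_le_div_iff₀ (by positivity) (by positivity), mul_comm (optWins _ s.get : ℚ),
    mul_comm (optWins _ (insertValue x s.get) : ℚ)]
  exact_mod_cast factorial_mul_optWins_le_insertValue s.sum x s.get

theorem gFull_lt_gFull_cons {s : List ℕ} (hs : s ≠ []) (hpos : ∀ a ∈ s, 0 < a) (x : ℕ) :
    gFull s < gFull (x :: s) := by
  have : NeZero s.length := ⟨by simpa using hs⟩
  have hsum : s.sum ≠ 0 := fun h =>
    (hpos _ (s.head_mem hs)).ne' (List.sum_eq_zero_iff.1 h _ (s.head_mem hs))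
  rw [gFull_eq_optWins_div hs, gFull_cons_eq_optWins_div,
    div_lt_div_iff₀ (by positivity) (by positivity), mul_comm (optWins _ s.get : ℚ),
    mul_comm (optWins _ (insertValue x s.get) : ℚ)]
  exact_mod_cast factorial_mul_optWins_lt_insertValue hsum x (by simp)
    fun i => hpos _ (s.get_mem i)

end GreedyStrategy

/-- Inserting an extra value (with any number of cards) into the deck cannot decrease
the greedy winning probability of the full game; if all entries of `s` are positive
and the inserted entry is at least `1`, it strictly increases. -/
theorem stmt9 (s : List ℕ) (hs : 1 ≤ s.length) (k : ℕ) (hk : k ≤ s.length) (x : ℕ) :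
    gFull s ≤ gFull (s.take k ++ x :: s.drop k) ∧
      ((∀ a ∈ s, 0 < a) → 1 ≤ x →
        gFull s < gFull (s.take k ++ x :: s.drop k)) := by
  have hperm : (s.take k ++ x :: s.drop k).Perm (x :: s) := by
    simpa using List.perm_middle (a := x) (l₁ := s.take k) (l₂ := s.drop k)
  have hne : s ≠ [] := List.ne_nil_of_length_pos hs
  rw [gFull_perm hperm]
  exact ⟨gFull_le_gFull_cons hne x, fun hpos _ => gFull_lt_gFull_cons hne hpos x⟩
end

section
/- For every integer ℓ ≥ 1 and real ε > 0 there exists v₀ such that for every deck composition s = (s₁,…,s_v) with v ≥ v₀ and 1 ≤ sᵢ ≤ ℓ for all i, the greedy strategy wins the full game with probability g(s) ≥ 1 - ε. -/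
/-!
Let `N` be the number of cards and `K = ⌊δ N⌋`. In round `t` any guess, however adaptive, is correct
with probability at most `ℓ / (N - t)`, because the undealt cards are exchangeable; hence some guess
among the first `K` is correct with probability at most `2 δ ℓ`. For each of the `v` values, all its
copies lie among the first `K` cards with probability at least `(δ / 2) ^ ℓ`, and these events are
pairwise negatively correlated, so by the second moment method some value is exhausted by then,
except with probability at most `1 / (v (δ / 2) ^ ℓ)`. From that moment on the player names an
exhausted value and cannot lose.
-/

section Permutations

open Finset
open scoped Nat

theorem sum_card_filter_mem_sq {Ω ι : Type*} [Fintype Ω] [DecidableEq Ω]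
    (I : Finset ι) (B : ι → Finset Ω) :
    ∑ ω, #{i ∈ I | ω ∈ B i} ^ 2 = ∑ i ∈ I, ∑ j ∈ I, #(B i ∩ B j) := by
  simp only [card_eq_sum_ones, sum_filter, sq, sum_mul_sum]
  rw [sum_comm]
  refine sum_congr rfl fun i _ ↦ ?_
  rw [sum_comm]
  refine sum_congr rfl fun j _ ↦ ?_
  simp only [mul_ite, mul_one, mul_zero, ← ite_and, ← sum_filter, ← card_eq_sum_ones]
  congr 1
  grind

theorem sum_card_filter_mem_sq_mul_card_le {Ω ι : Type*} [Fintype Ω] [DecidableEq Ω]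
    (I : Finset ι) (B : ι → Finset Ω)
    (hB : (I : Set ι).Pairwise fun i j ↦ #(B i ∩ B j) * Fintype.card Ω ≤ #(B i) * #(B j)) :
    (∑ ω, #{i ∈ I | ω ∈ B i} ^ 2) * Fintype.card Ω ≤
      (∑ i ∈ I, #(B i)) * Fintype.card Ω + (∑ i ∈ I, #(B i)) ^ 2 := by
  classical
  set n := Fintype.card Ω
  have term_le : ∀ i ∈ I, ∀ j ∈ I,
      #(B i ∩ B j) * n ≤ (if i = j then #(B i) * n else 0) + #(B i) * #(B j) := by
    intro i hi j hj
    split_ifs with hij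
    · simp [hij]
    · simpa using hB hi hj hij
  calc (∑ ω, #{i ∈ I | ω ∈ B i} ^ 2) * n = ∑ i ∈ I, ∑ j ∈ I, #(B i ∩ B j) * n := by
        simp only [sum_card_filter_mem_sq, sum_mul]
    _ ≤ ∑ i ∈ I, ∑ j ∈ I, ((if i = j then #(B i) * n else 0) + #(B i) * #(B j)) :=
        sum_le_sum fun i hi ↦ sum_le_sum (term_le i hi)
    _ = (∑ i ∈ I, #(B i)) * n + (∑ i ∈ I, #(B i)) ^ 2 := by
        rw [sq, sum_mul_sum, sum_mul, ← sum_add_distrib]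
        simp +contextual [sum_add_distrib]

theorem card_forall_notMem_mul_sum_card_le_sq {Ω ι : Type*} [Fintype Ω] [DecidableEq Ω]
    (I : Finset ι) (B : ι → Finset Ω)
    (hB : (I : Set ι).Pairwise fun i j ↦ #(B i ∩ B j) * Fintype.card Ω ≤ #(B i) * #(B j)) :
    #{ω | ∀ i ∈ I, ω ∉ B i} * ∑ i ∈ I, #(B i) ≤ Fintype.card Ω ^ 2 := by
  have sum_X_sq := sum_card_filter_mem_sq_mul_card_le I B hB
  set n := Fintype.card Ω
  set M := ∑ i ∈ I, #(B i)
  let X : Ω → ℕ := fun ω ↦ #{i ∈ I | ω ∈ B i}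
  set P : Finset Ω := {ω | ∀ i ∈ I, ω ∉ B i}
  have sum_X : ∑ ω ∈ Pᶜ, X ω = M :=
    calc ∑ ω ∈ Pᶜ, X ω = ∑ ω, X ω := sum_subset (subset_univ _) fun ω _ hω ↦ by
          simpa [P, X, filter_eq_empty_iff] using hω
      _ = M := by
          simpa [M, X, bipartiteAbove, bipartiteBelow] using
            sum_card_bipartiteAbove_eq_sum_card_bipartiteBelow (s := univ) (t := I)
              fun ω i ↦ ω ∈ B i
  have cauchy_schwarz : M ^ 2 * n ≤ #Pᶜ * (M * n + M ^ 2) :=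
    calc M ^ 2 * n ≤ (#Pᶜ * ∑ ω ∈ Pᶜ, X ω ^ 2) * n := by
          rw [← sum_X]
          gcongr
          exact_mod_cast sq_sum_le_card_mul_sum_sq (s := Pᶜ) (f := X)
      _ ≤ #Pᶜ * (M * n + M ^ 2) := by
          rw [mul_assoc]
          gcongr
          refine le_trans ?_ sum_X_sq
          gcongr
          exact subset_univ _
  have card_P : #P + #Pᶜ = n := card_add_card_compl P
  obtain hM | hM := M.eq_zero_or_pos
  · simp [hM]
  · refine Nat.le_of_mul_le_mul_left ?_ hM
    rw [← card_P] at cauchy_schwarz ⊢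
    nlinarith [Nat.zero_le (M * #P * (#P + #Pᶜ))]

variable {α : Type*} [Fintype α] [DecidableEq α]

theorem card_subset_map_perm_congr (S A : Finset α) {a b : α} (ha : a ∉ A) (hb : b ∉ A) :
    #{σ : Equiv.Perm α | insert a A ⊆ S.map σ.toEmbedding} =
      #{σ : Equiv.Perm α | insert b A ⊆ S.map σ.toEmbedding} := by
  refine card_equiv (Equiv.mulLeft (Equiv.swap a b)) fun σ ↦ ?_
  simp only [mem_filter, mem_univ, true_and, subset_iff, forall_mem_insert, mem_map_equiv]
  have fix : ∀ x ∈ A, Equiv.swap a b x = x := fun x hx ↦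
    Equiv.swap_apply_of_ne_of_ne (ne_of_mem_of_not_mem hx ha) (ne_of_mem_of_not_mem hx hb)
  simp +contextual [Equiv.Perm.mul_def, fix]

theorem card_insert_subset_map_perm (S A : Finset α) {a : α} (ha : a ∉ A) :
    (Fintype.card α - #A) * #{σ : Equiv.Perm α | insert a A ⊆ S.map σ.toEmbedding} =
      (#S - #A) * #{σ : Equiv.Perm α | A ⊆ S.map σ.toEmbedding} := by
  have extensions : ∀ σ : Equiv.Perm α, #{b ∈ Aᶜ | insert b A ⊆ S.map σ.toEmbedding} =
      if A ⊆ S.map σ.toEmbedding then #S - #A else 0 := by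
    intro σ
    split_ifs with hA
    · rw [← card_map (s := S) σ.toEmbedding, ← card_sdiff_of_subset hA]
      congr 1
      ext b
      simp only [mem_filter, mem_compl, insert_subset_iff, mem_sdiff]
      tauto
    · exact card_eq_zero.2 (filter_eq_empty_iff.2 fun b _ h ↦ hA ((subset_insert b A).trans h))
  calc (Fintype.card α - #A) * #{σ : Equiv.Perm α | insert a A ⊆ S.map σ.toEmbedding}
      = ∑ b ∈ Aᶜ, #{σ : Equiv.Perm α | insert b A ⊆ S.map σ.toEmbedding} := by
        rw [← card_compl, ← smul_eq_mul, ← sum_const]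
        exact sum_congr rfl fun b hb ↦ card_subset_map_perm_congr S A ha (mem_compl.1 hb)
    _ = ∑ σ : Equiv.Perm α, #{b ∈ Aᶜ | insert b A ⊆ S.map σ.toEmbedding} :=
        (sum_card_bipartiteAbove_eq_sum_card_bipartiteBelow
          fun σ b ↦ insert b A ⊆ S.map (Equiv.toEmbedding σ)).symm
    _ = (#S - #A) * #{σ : Equiv.Perm α | A ⊆ S.map σ.toEmbedding} := by
        simp only [extensions, ← sum_filter, sum_const, smul_eq_mul, mul_comm]

theorem card_subset_map_perm (S A : Finset α) :
    (Fintype.card α).descFactorial #A * #{σ : Equiv.Perm α | A ⊆ S.map σ.toEmbedding} =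
      (#S).descFactorial #A * (Fintype.card α)! := by
  induction A using Finset.induction_on with
  | empty => simp [Fintype.card_perm]
  | insert a A ha ih =>
    rw [card_insert_of_notMem ha, Nat.descFactorial_succ, Nat.descFactorial_succ, mul_right_comm,
      card_insert_subset_map_perm S A ha]
    linear_combination (#S - #A) * ih

-- Submultiplicativity in `a` of `k.descFactorial a / n.descFactorial a`, the probability that `a`
-- given points land in a given `k`-subset of `n` places; cleared of denominators.
theorem descFactorial_add_mul_le {k n : ℕ} (hkn : k ≤ n) (a b : ℕ) :
    k.descFactorial (a + b) * (n.descFactorial a * n.descFactorial b) ≤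
      n.descFactorial (a + b) * (k.descFactorial a * k.descFactorial b) := by
  induction b with
  | zero => simp [mul_comm]
  | succ b ih =>
    have factor_le : (k - (a + b)) * (n - b) ≤ (n - (a + b)) * (k - b) := by
      obtain h | h := le_total k (a + b)
      · simp [Nat.sub_eq_zero_of_le h]
      · zify [h, h.trans hkn, (Nat.le_add_left b a).trans h,
          ((Nat.le_add_left b a).trans h).trans hkn]
        nlinarith
    simp only [← add_assoc, Nat.descFactorial_succ]
    calc _ = ((k - (a + b)) * (n - b)) * (k.descFactorial (a + b) *
            (n.descFactorial a * n.descFactorial b)) := by ring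
      _ ≤ ((n - (a + b)) * (k - b)) * (n.descFactorial (a + b) *
            (k.descFactorial a * k.descFactorial b)) := Nat.mul_le_mul factor_le ih
      _ = _ := by ring

theorem card_union_subset_map_perm_mul_le (S : Finset α) {A B : Finset α} (hAB : Disjoint A B) :
    #{σ : Equiv.Perm α | A ∪ B ⊆ S.map σ.toEmbedding} * (Fintype.card α)! ≤
      #{σ : Equiv.Perm α | A ⊆ S.map σ.toEmbedding} *
        #{σ : Equiv.Perm α | B ⊆ S.map σ.toEmbedding} := by
  set n := Fintype.card α
  have hcard : #(A ∪ B) = #A + #B := card_union_of_disjoint hAB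
  have hpos : 0 < n.descFactorial (#A + #B) * (n.descFactorial #A * n.descFactorial #B) := by
    have := card_le_univ (A ∪ B)
    have := card_le_univ A
    have := card_le_univ B
    simp only [Nat.pos_iff_ne_zero, ne_eq, mul_eq_zero, Nat.descFactorial_eq_zero_iff_lt]
    lia
  have hU := card_subset_map_perm S (A ∪ B)
  have hA := card_subset_map_perm S A
  have hB := card_subset_map_perm S B
  rw [hcard] at hU
  have key := Nat.mul_le_mul_right (n ! ^ 2) (descFactorial_add_mul_le (card_le_univ S) #A #B)
  refine Nat.le_of_mul_le_mul_left ?_ hpos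
  calc _ = n.descFactorial (#A + #B) * #{σ : Equiv.Perm α | A ∪ B ⊆ S.map σ.toEmbedding} *
          (n.descFactorial #A * n.descFactorial #B) * n ! := by ring
    _ = (#S).descFactorial (#A + #B) * (n.descFactorial #A * n.descFactorial #B) * n ! ^ 2 := by
        rw [hU]; ring
    _ ≤ n.descFactorial (#A + #B) * ((#S).descFactorial #A * n !) *
          ((#S).descFactorial #B * n !) := key.trans_eq (by ring)
    _ = _ := by rw [← hA, ← hB]; ring

theorem pow_mul_factorial_le_card_subset_map_perm (S A : Finset α) {c : ℝ} (hc : 0 ≤ c)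
    (hS : c * Fintype.card α + #A ≤ #S + 1) :
    c ^ #A * (Fintype.card α)! ≤ #{σ : Equiv.Perm α | A ⊆ S.map σ.toEmbedding} := by
  set n := Fintype.card α
  have hpos : (0 : ℝ) < n.descFactorial #A := by
    exact_mod_cast Nat.descFactorial_pos.2 (card_le_univ A)
  have base_le : c * n ≤ (#S + 1 - #A : ℕ) := by
    rw [Nat.cast_sub (by exact_mod_cast (le_add_of_nonneg_left (by positivity)).trans hS)]
    push_cast
    linarith
  have pow_le : (c * n) ^ #A ≤ (#S).descFactorial #A :=
    calc (c * n) ^ #A ≤ ((#S + 1 - #A : ℕ) : ℝ) ^ #A := by gcongr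
      _ ≤ (#S).descFactorial #A := by exact_mod_cast Nat.pow_sub_le_descFactorial _ _
  refine le_of_mul_le_mul_left ?_ hpos
  calc (n.descFactorial #A : ℝ) * (c ^ #A * n !) ≤ (n : ℝ) ^ #A * (c ^ #A * n !) := by
        gcongr
        exact_mod_cast Nat.descFactorial_le_pow n #A
    _ = (c * n) ^ #A * n ! := by ring
    _ ≤ (#S).descFactorial #A * n ! := by gcongr
    _ = n.descFactorial #A * #{σ : Equiv.Perm α | A ⊆ S.map σ.toEmbedding} := by
        exact_mod_cast (card_subset_map_perm S A).symm

theorem card_forall_not_subset_map_perm_mul_le {ι : Type*} (I : Finset ι) (A : ι → Finset α)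
    (hA : (I : Set ι).PairwiseDisjoint A) {ℓ : ℕ} (hℓ : ∀ i ∈ I, #(A i) ≤ ℓ) (S : Finset α)
    {c : ℝ} (hc₀ : 0 ≤ c) (hc₁ : c ≤ 1) (hS : c * Fintype.card α + ℓ ≤ #S + 1) :
    #{σ : Equiv.Perm α | ∀ i ∈ I, ¬A i ⊆ S.map σ.toEmbedding} * (#I * c ^ ℓ) ≤
      ((Fintype.card α)! : ℝ) := by
  let B : ι → Finset (Equiv.Perm α) := fun i ↦ {σ | A i ⊆ S.map σ.toEmbedding}
  have sum_le : #I * c ^ ℓ * (Fintype.card α)! ≤ ((∑ i ∈ I, #(B i) : ℕ) : ℝ) := by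
    rw [mul_assoc, ← nsmul_eq_mul, Nat.cast_sum]
    refine card_nsmul_le_sum _ _ _ fun i hi ↦ ?_
    have card_le : (#(A i) : ℝ) ≤ ℓ := by exact_mod_cast hℓ i hi
    calc c ^ ℓ * (Fintype.card α)! ≤ c ^ #(A i) * (Fintype.card α)! := by
          gcongr ?_ * _
          exact pow_le_pow_of_le_one hc₀ hc₁ (hℓ i hi)
      _ ≤ #(B i) := pow_mul_factorial_le_card_subset_map_perm S (A i) hc₀ (by linarith)
  have second_moment : #{σ : Equiv.Perm α | ∀ i ∈ I, ¬A i ⊆ S.map σ.toEmbedding} *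
      ∑ i ∈ I, #(B i) ≤ (Fintype.card α)! ^ 2 := by
    have := card_forall_notMem_mul_sum_card_le_sq I B fun i hi j hj hij ↦ by
      simpa only [B, ← filter_and, ← union_subset_iff, Fintype.card_perm] using
        card_union_subset_map_perm_mul_le S (hA hi hj hij)
    simpa only [B, mem_filter, mem_univ, true_and, Fintype.card_perm] using this
  refine le_of_mul_le_mul_right ?_ (Nat.cast_pos.2 (Fintype.card α).factorial_pos)
  calc _ = #{σ : Equiv.Perm α | ∀ i ∈ I, ¬A i ⊆ S.map σ.toEmbedding} *
          (#I * c ^ ℓ * (Fintype.card α)!) := by ring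
    _ ≤ #{σ : Equiv.Perm α | ∀ i ∈ I, ¬A i ⊆ S.map σ.toEmbedding} *
          ((∑ i ∈ I, #(B i) : ℕ) : ℝ) := by gcongr
    _ ≤ (Fintype.card α)! * (Fintype.card α)! := by
        rw [← sq]
        exact_mod_cast second_moment

-- Swapping places `t` and `j` leaves the guess unchanged, so it is equally likely to match the
-- entry at any place of `T`; at most `ℓ` places carry the guessed value.
theorem card_perm_guess_eq_mul_card_le {β : Type*} [DecidableEq β] (f : α → β) {ℓ : ℕ}
    (hf : ∀ b, #{a | f a = b} ≤ ℓ) (G : Equiv.Perm α → β) (T : Finset α) (t : α)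
    (hG : ∀ σ, ∀ j ∈ T, G (σ * Equiv.swap t j) = G σ) :
    #{σ : Equiv.Perm α | G σ = f (σ t)} * #T ≤ ℓ * (Fintype.card α)! := by
  have guess_swap : ∀ j ∈ T, #{σ : Equiv.Perm α | G σ = f (σ t)} =
      #{σ : Equiv.Perm α | G σ = f (σ j)} := fun j hj ↦
    card_equiv (Equiv.mulRight (Equiv.swap t j)) fun σ ↦ by simp [hG σ j hj]
  calc #{σ : Equiv.Perm α | G σ = f (σ t)} * #T
      = ∑ j ∈ T, #{σ : Equiv.Perm α | G σ = f (σ j)} := by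
        rw [← sum_congr rfl guess_swap, sum_const, smul_eq_mul, mul_comm]
    _ = ∑ σ : Equiv.Perm α, #{j ∈ T | G σ = f (σ j)} :=
        (sum_card_bipartiteAbove_eq_sum_card_bipartiteBelow fun σ j ↦ G σ = f (σ j)).symm
    _ ≤ ∑ _σ : Equiv.Perm α, ℓ := sum_le_sum fun σ _ ↦
        (card_le_card_of_injOn σ (by simp +contextual [Set.MapsTo]) σ.injective.injOn).trans
          (hf (G σ))
    _ = ℓ * (Fintype.card α)! := by simp [Fintype.card_perm, mul_comm]

end Permutations

section Deals
open Finset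
open scoped Nat
variable {β : Type*}

/-- The shuffle of the list `L` given by `σ`: place `k` receives the entry at index `σ k` of `L`.
Shuffling indices keeps equal entries distinguishable, so that a uniform `σ` is a uniform ordering
of a deck with repeated values. -/
def deal (L : List β) (σ : Equiv.Perm (Fin L.length)) : List β :=
  List.ofFn fun k ↦ L[σ k]

@[simp]
theorem length_deal (L : List β) (σ : Equiv.Perm (Fin L.length)) :
    (deal L σ).length = L.length := by
  simp [deal]

@[simp]
theorem getElem_deal (L : List β) (σ : Equiv.Perm (Fin L.length)) {k : ℕ}
    (hk : k < (deal L σ).length) :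
    (deal L σ)[k] = L[σ ⟨k, by simpa using hk⟩] := by
  simp [deal]

theorem deal_perm (L : List β) (σ : Equiv.Perm (Fin L.length)) : (deal L σ).Perm L := by
  simpa [deal, Function.comp_def] using Equiv.Perm.ofFn_comp_perm σ L.get

theorem take_deal_mul_swap (L : List β) (σ : Equiv.Perm (Fin L.length)) {t j : Fin L.length}
    (htj : t ≤ j) : (deal L (σ * Equiv.swap t j)).take t = (deal L σ).take t := by
  refine List.ext_getElem (by simp) fun k hk _ ↦ ?_
  have hkt : k < t := by
    rw [List.length_take, lt_min_iff] at hk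
    exact hk.1
  have fixed : Equiv.swap t j ⟨k, hkt.trans t.2⟩ = ⟨k, hkt.trans t.2⟩ :=
    Equiv.swap_apply_of_ne_of_ne (Fin.ne_of_lt hkt) (Fin.ne_of_lt (hkt.trans_le htj))
  simp [fixed]

theorem map_ofFn_perm_permutations_finRange (n : ℕ) :
    ((univ : Finset (Equiv.Perm (Fin n))).toList.map fun σ : Equiv.Perm (Fin n) ↦ List.ofFn σ).Perm
      (List.finRange n).permutations := by
  refine (List.subperm_of_subset ?_ ?_).perm_of_length_le ?_
  · exact (nodup_toList _).map fun σ τ h ↦ Equiv.coe_fn_injective (List.ofFn_injective h)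
  · intro l hl
    obtain ⟨σ, -, rfl⟩ := List.mem_map.1 hl
    simpa [List.ofFn_id] using Equiv.Perm.ofFn_comp_perm σ id
  · simp [List.length_permutations, Fintype.card_perm]

theorem countP_permutations_eq_card (L : List β) (p : List β → Bool) :
    L.permutations.countP p = #{σ : Equiv.Perm (Fin L.length) | p (deal L σ)} := by
  have hL : L.permutations = (List.finRange L.length).permutations.map (List.map L.get) := by
    rw [List.map_permutations, List.map_get_finRange]
  rw [hL, List.countP_map, ← (map_ofFn_perm_permutations_finRange _).countP_eq, List.countP_map,
    card_def, filter_val, ← Multiset.countP_eq_card_filter, ← coe_toList, Multiset.coe_countP]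
  refine List.countP_congr fun σ _ ↦ ?_
  simp only [Function.comp_def, List.map_ofFn, deal, List.get_eq_getElem, Fin.getElem_fin]
  exact decide_eq_true_iff.symm

variable [DecidableEq β]

theorem card_filter_getElem_eq (L : List β) (c : β) :
    #{a : Fin L.length | L[a] = c} = L.count c :=
  Fin.card_filter_univ_eq_vector_get_eq_count c (⟨L, rfl⟩ : List.Vector β L.length)

theorem card_hit_mul_le (L : List β) {ℓ : ℕ} (hL : ∀ c, L.count c ≤ ℓ) (strat : List β → β)
    (t : Fin L.length) :
    #{σ | strat ((deal L σ).take t) = L[σ t]} * (L.length - t) ≤ ℓ * L.length ! := by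
  simpa using card_perm_guess_eq_mul_card_le (fun a : Fin L.length ↦ L[a])
    (fun c ↦ (card_filter_getElem_eq L c).trans_le (hL c)) (fun σ ↦ strat ((deal L σ).take t))
    (Ici t) t fun σ j hj ↦ congrArg strat (take_deal_mul_swap L σ (mem_Ici.1 hj))

theorem card_early_hit_mul_le (L : List β) {ℓ : ℕ} (hL : ∀ c, L.count c ≤ ℓ)
    (strat : List β → β) (K : ℕ) :
    #{σ | ∃ t : Fin L.length, t < K ∧ strat ((deal L σ).take t) = L[σ t]} * (L.length - K) ≤
      K * (ℓ * L.length !) := by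
  let early : Finset (Fin L.length) := {t | t < K}
  let hit (t : Fin L.length) : Finset (Equiv.Perm (Fin L.length)) :=
    {σ | strat ((deal L σ).take t) = L[σ t]}
  have hit_le : ∀ t ∈ early, #(hit t) * (L.length - K) ≤ ℓ * L.length ! := fun t ht ↦
    (Nat.mul_le_mul_left _ (Nat.sub_le_sub_left (mem_filter.1 ht).2.le _)).trans
      (card_hit_mul_le L hL strat t)
  calc #{σ | ∃ t : Fin L.length, t < K ∧ strat ((deal L σ).take t) = L[σ t]} * (L.length - K)
      = #(early.biUnion hit) * (L.length - K) := by
        congr 2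
        ext σ
        simp [early, hit]
    _ ≤ ∑ t ∈ early, #(hit t) * (L.length - K) := by
        rw [← sum_mul]
        exact Nat.mul_le_mul_right _ card_biUnion_le
    _ ≤ #early * (ℓ * L.length !) := sum_le_card_nsmul _ _ _ hit_le
    _ ≤ K * (ℓ * L.length !) := by
        gcongr
        exact Fin.card_filter_val_lt.trans_le (min_le_right _ _)

theorem card_early_hit_le (L : List β) {ℓ : ℕ} (hL : ∀ c, L.count c ≤ ℓ)
    (strat : List β → β) {δ : ℝ} (hδ₀ : 0 ≤ δ) (hδ : δ ≤ 1 / 2) :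
    #{σ | ∃ t : Fin L.length, t < ⌊δ * L.length⌋₊ ∧ strat ((deal L σ).take t) = L[σ t]} ≤
      2 * δ * ℓ * (L.length ! : ℝ) := by
  obtain hN | hN := L.length.eq_zero_or_pos
  · have : IsEmpty (Fin L.length) := hN ▸ Fin.isEmpty
    simp only [IsEmpty.exists_iff, filter_false, card_empty, Nat.cast_zero]
    positivity
  have floor_le : (⌊δ * L.length⌋₊ : ℝ) ≤ δ * L.length := Nat.floor_le (by positivity)
  have half_le : δ * L.length ≤ 1 / 2 * L.length := by gcongr
  have floor_le_length : ⌊δ * L.length⌋₊ ≤ L.length := by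
    rify
    linarith
  have early_le := Nat.cast_le (α := ℝ).2 (card_early_hit_mul_le L hL strat ⌊δ * L.length⌋₊)
  simp only [Nat.cast_mul, Nat.cast_sub floor_le_length] at early_le
  have hN' : (0 : ℝ) < L.length / 2 := by positivity
  refine le_of_mul_le_mul_right ?_ hN'
  refine (mul_le_mul_of_nonneg_left (by linarith) (Nat.cast_nonneg _)).trans (early_le.trans ?_)
  calc ⌊δ * L.length⌋₊ * (ℓ * L.length ! : ℝ)
      ≤ δ * L.length * (ℓ * L.length ! : ℝ) := by gcongr
    _ = 2 * δ * ℓ * L.length ! * (L.length / 2) := by ring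

theorem card_forall_mem_drop_mul_le (L : List β) {ℓ : ℕ} (V : Finset β)
    (hV : ∀ c ∈ V, L.count c ≤ ℓ) {K : ℕ} (hK : K ≤ L.length) {r : ℝ} (hr₀ : 0 ≤ r) (hr₁ : r ≤ 1)
    (hr : r * L.length + ℓ ≤ K + 1) :
    #{σ | ∀ c ∈ V, c ∈ (deal L σ).drop K} * (#V * r ^ ℓ) ≤ (L.length ! : ℝ) := by
  let copies (c : β) : Finset (Fin L.length) := {a | L[a] = c}
  let dealt : Finset (Fin L.length) := {k | k < K}
  have card_dealt : #dealt = K := by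
    simpa [dealt, hK] using Fin.card_filter_val_lt (n := L.length) (m := K)
  have not_subset : ∀ σ : Equiv.Perm (Fin L.length), ∀ c, c ∈ (deal L σ).drop K →
      ¬copies c ⊆ dealt.map σ.toEmbedding := by
    intro σ c hc hsub
    obtain ⟨k, hk, rfl⟩ := List.mem_drop_iff_getElem.1 hc
    rw [length_deal] at hk
    have := @hsub (σ ⟨K + k, by lia⟩) (by simp [copies])
    simp [dealt] at this
  have disjoint_copies : (V : Set β).PairwiseDisjoint copies := fun c _ c' _ hcc' ↦
    disjoint_filter.2 fun a _ h h' ↦ hcc' (h.symm.trans h')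
  have bound := card_forall_not_subset_map_perm_mul_le V copies disjoint_copies
    (fun c hc ↦ (card_filter_getElem_eq L c).trans_le (hV c hc)) dealt hr₀ hr₁
    (by rwa [card_dealt, Fintype.card_fin])
  rw [Fintype.card_fin] at bound
  refine le_trans ?_ bound
  gcongr with σ _ c _
  exact not_subset σ c

end Deals

theorem winsAux_eq_true_iff (strat : List ℕ → ℕ) (hist : List ℕ) (m : ℕ) (d : List ℕ) :
    winsAux strat hist m d = true ↔
      ∀ k < m, ∀ hk : k < d.length, strat (hist ++ d.take k) ≠ d[k] := by
  induction d generalizing hist m with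
  | nil => cases m <;> simp [winsAux]
  | cons c d ih =>
    cases m with
    | zero => simp [winsAux]
    | succ m =>
      simp only [winsAux, Bool.and_eq_true, bne_iff_ne, ih, List.append_assoc]
      constructor
      · rintro ⟨h₀, h⟩ (_ | k) hkm hk
        · simpa using h₀
        · simpa using h k (by lia) (by simpa using hk)
      · intro h
        exact ⟨by simpa using h 0, fun k hkm hk ↦ by
          simpa using h (k + 1) (Nat.succ_lt_succ hkm) (Nat.succ_lt_succ hk)⟩

theorem count_succ_deckList (s : List ℕ) (i : ℕ) : (deckList s).count (i + 1) = s.getD i 0 := by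
  rw [deckList, List.count_flatMap, List.sum_map_eq_nsmul_single i]
  · by_cases hi : i < s.length
    · simp [List.count_eq_one_of_mem List.nodup_range (List.mem_range.2 hi)]
    · simp [List.count_eq_zero.2 (mt List.mem_range.1 hi), List.getElem?_eq_none (not_lt.1 hi)]
  · intro j hj _
    simp [List.count_replicate, hj]

theorem pos_of_mem_deckList {s : List ℕ} {c : ℕ} (hc : c ∈ deckList s) : 0 < c := by
  simp only [deckList, List.mem_flatMap, List.mem_replicate] at hc
  lia

theorem length_le_length_deckList {s : List ℕ} (hs : ∀ a ∈ s, 1 ≤ a) :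
    s.length ≤ (deckList s).length :=
  length_deckList s ▸ List.length_le_sum_of_one_le s hs

theorem count_deckList_le {s : List ℕ} {ℓ : ℕ} (hs : ∀ a ∈ s, a ≤ ℓ) (c : ℕ) :
    (deckList s).count c ≤ ℓ := by
  rcases c with - | i
  · rw [List.count_eq_zero.2 fun h ↦ (pos_of_mem_deckList h).ne rfl]
    exact Nat.zero_le ℓ
  · rw [count_succ_deckList, List.getD_eq_getElem?_getD]
    cases h : s[i]? with
    | none => exact Nat.zero_le ℓ
    | some a => exact hs a (List.mem_of_getElem? h)

theorem remCount_take {s d : List ℕ} (hd : d.Perm (deckList s)) (k : ℕ) {c : ℕ} (hc : 0 < c) :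
    remCount s (d.take k) c = (d.drop k).count c := by
  obtain ⟨i, rfl⟩ := Nat.exists_eq_add_one.2 hc
  rw [remCount, Nat.add_sub_cancel, ← count_succ_deckList, ← hd.count_eq]
  nth_rw 1 [← d.take_append_drop k]
  rw [List.count_append, Nat.add_sub_cancel_left]

/-- Once some value of the `s`-deck has run out, `strat` names a value without remaining copies.
Greedy play has this property whatever its tie-breaking rule; before the first value runs out,
`strat` is arbitrary. Values are numbered from `1`, as in `deckList`, but the named value need not
belong to the deck: `remCount` vanishes above `s.length`, whereas at `0` truncated subtraction makes
it read the first entry of `s`. -/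
def NamesExhausted (s : List ℕ) (strat : List ℕ → ℕ) : Prop :=
  ∀ hist, (∃ c ∈ List.range' 1 s.length, remCount s hist c = 0) →
    remCount s hist (strat hist) = 0

theorem namesExhausted_greedyStrat (s : List ℕ) : NamesExhausted s (greedyStrat s) := by
  rintro hist ⟨c, hc, hc₀⟩
  obtain ⟨b, hb⟩ := Option.ne_none_iff_exists'.1
    (mt List.argmin_eq_none.1 (List.ne_nil_of_mem hc) :
      (List.range' 1 s.length).argmin (remCount s hist) ≠ none)
  rw [greedyStrat, hb, Option.getD_some]
  exact Nat.le_zero.1 (hc₀ ▸ List.le_of_mem_argmin hc hb)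

theorem NamesExhausted.strat_take_ne {s d : List ℕ} {strat : List ℕ → ℕ}
    (hstrat : NamesExhausted s strat) (hd : d.Perm (deckList s)) {c : ℕ}
    (hc : c ∈ List.range' 1 s.length) {k : ℕ} (hcd : c ∉ d.drop k) (hk : k < d.length) :
    strat (d.take k) ≠ d[k] := by
  intro hit
  have remCount_hit : remCount s (d.take k) d[k] = 0 := hit ▸ hstrat _ ⟨c, hc, by
    rw [remCount_take hd k (List.mem_range'_1.1 hc).1, List.count_eq_zero.2 hcd]⟩
  rw [remCount_take hd k (pos_of_mem_deckList (hd.mem_iff.1 (List.getElem_mem hk))),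
    List.count_eq_zero] at remCount_hit
  exact remCount_hit (List.drop_eq_getElem_cons hk ▸ List.mem_cons_self)

section Greedy
open Finset
open scoped Nat

variable {s : List ℕ} {strat : List ℕ → ℕ}

theorem NamesExhausted.winsAux_deal (hstrat : NamesExhausted s strat) (m K : ℕ)
    {σ : Equiv.Perm (Fin (deckList s).length)}
    (hearly : ∀ t : Fin (deckList s).length, t < K →
      strat ((deal (deckList s) σ).take t) ≠ (deckList s)[σ t])
    {c : ℕ} (hc : c ∈ List.range' 1 s.length) (hcK : c ∉ (deal (deckList s) σ).drop K) :
    winsAux strat [] m (deal (deckList s) σ) = true := by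
  refine (winsAux_eq_true_iff strat [] m _).2 fun k _ hk ↦ ?_
  obtain hkK | hKk := lt_or_ge k K
  · simpa using hearly ⟨k, by simpa using hk⟩ hkK
  · exact hstrat.strat_take_ne (deal_perm _ σ) hc
      (fun h ↦ hcK ((List.drop_sublist_drop_left _ hKk).subset h)) hk

theorem NamesExhausted.factorial_le_card_wins_add (hstrat : NamesExhausted s strat) (m K : ℕ) :
    (deckList s).length ! ≤
      #{σ | winsAux strat [] m (deal (deckList s) σ) = true} +
        (#{σ | ∃ t : Fin (deckList s).length,
            t < K ∧ strat ((deal (deckList s) σ).take t) = (deckList s)[σ t]} +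
          #{σ | ∀ c ∈ (List.range' 1 s.length).toFinset, c ∈ (deal (deckList s) σ).drop K}) := by
  have card_perm : #(univ : Finset (Equiv.Perm (Fin (deckList s).length))) =
      (deckList s).length ! := by
    rw [card_univ, Fintype.card_perm, Fintype.card_fin]
  refine card_perm.ge.trans <| (card_le_card fun σ _ ↦ ?_).trans
    ((card_union_le _ _).trans (Nat.add_le_add_left (card_union_le _ _) _))
  by_contra hσ
  simp only [mem_union, mem_filter, mem_univ, true_and, not_or, not_exists, not_and, not_forall,
    List.mem_toFinset] at hσ
  obtain ⟨lost, no_early_hit, c, hc, hcK⟩ := hσ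
  exact lost (hstrat.winsAux_deal m K no_early_hit hc hcK)

theorem NamesExhausted.one_sub_le_winProb (hstrat : NamesExhausted s strat) (m : ℕ) {ℓ : ℕ}
    (hs : ∀ a ∈ s, 1 ≤ a ∧ a ≤ ℓ) (hs₀ : s ≠ []) {δ : ℝ} (hδ₀ : 0 < δ) (hδ : δ ≤ 1 / 2)
    (hℓ : 2 * ℓ ≤ δ * s.length) :
    1 - (2 * δ * ℓ + 1 / (s.length * (δ / 2) ^ ℓ)) ≤ (winProb strat s m : ℝ) := by
  have length_pos : (0 : ℝ) < s.length := Nat.cast_pos.2 (List.length_pos_of_ne_nil hs₀)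
  have length_le : (s.length : ℝ) ≤ (deckList s).length :=
    Nat.cast_le.2 (length_le_length_deckList fun a ha ↦ (hs a ha).1)
  have mult_le := count_deckList_le fun a ha ↦ (hs a ha).2
  have cover := Nat.cast_le (α := ℝ).2
    (hstrat.factorial_le_card_wins_add m ⌊δ * (deckList s).length⌋₊)
  have early_le := card_early_hit_le (deckList s) mult_le strat hδ₀.le hδ
  have late_le := card_forall_mem_drop_mul_le (deckList s) (List.range' 1 s.length).toFinset
    (fun c _ ↦ mult_le c) (K := ⌊δ * (deckList s).length⌋₊) (r := δ / 2)
    (Nat.floor_le_of_le (by nlinarith)) (by positivity) (by linarith)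
    (by nlinarith [Nat.lt_floor_add_one (δ * (deckList s).length)])
  rw [List.toFinset_card_of_nodup List.nodup_range', List.length_range',
    ← le_div_iff₀ (by positivity), div_eq_mul_one_div] at late_le
  rw [winProb, countP_permutations_eq_card]
  push_cast
  rw [le_div_iff₀ (by positivity)]
  simp only [Nat.cast_add] at cover
  linarith

end Greedy

theorem stmt11_general (ℓ : ℕ) (ε : ℝ) (hε : 0 < ε) :
    ∃ v₀ : ℕ, ∀ s : List ℕ, v₀ ≤ s.length → (∀ a ∈ s, 1 ≤ a ∧ a ≤ ℓ) →
      ∀ strat, NamesExhausted s strat → ∀ m : ℕ, 1 - ε ≤ (winProb strat s m : ℝ) := by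
  obtain ⟨δ, hδ₀, hδ, hδε⟩ : ∃ δ : ℝ, 0 < δ ∧ δ ≤ 1 / 2 ∧ 2 * δ * ℓ ≤ ε / 2 := by
    refine ⟨min (1 / 2) (ε / (4 * (ℓ + 1))), by positivity, min_le_left _ _, ?_⟩
    calc 2 * min (1 / 2) (ε / (4 * (ℓ + 1))) * ℓ ≤ 2 * (ε / (4 * (ℓ + 1))) * (ℓ + 1) := by
          gcongr
          · exact min_le_right _ _
          · exact le_add_of_nonneg_right zero_le_one
      _ = ε / 2 := by field_simp; norm_num
  refine ⟨⌈max (2 * ℓ / δ) (2 / (ε * (δ / 2) ^ ℓ))⌉₊, fun s hv hs strat hstrat m ↦ ?_⟩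
  obtain ⟨hvℓ, hvε⟩ := max_le_iff.1 (Nat.ceil_le.1 hv)
  have length_pos : (0 : ℝ) < s.length := hvε.trans_lt' (by positivity)
  have hs₀ : s ≠ [] := List.ne_nil_of_length_pos (Nat.cast_pos.1 length_pos)
  have not_exhausted_le : 1 / (s.length * (δ / 2) ^ ℓ) ≤ ε / 2 := by
    rw [div_le_iff₀ (by positivity)] at hvε
    rw [div_le_iff₀ (by positivity)]
    linarith
  have := hstrat.one_sub_le_winProb m hs hs₀ hδ₀ hδ ((div_le_iff₀' hδ₀).1 hvℓ)
  linarith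

/-- For bounded multiplicities, the greedy winning probability of the full game tends
to `1` as the number of values grows. -/
theorem stmt11 (ℓ : ℕ) (hℓ : 1 ≤ ℓ) (ε : ℝ) (hε : 0 < ε) :
    ∃ v₀ : ℕ, ∀ s : List ℕ, v₀ ≤ s.length →
      (∀ a ∈ s, 1 ≤ a ∧ a ≤ ℓ) → (1 : ℝ) - ε ≤ ((gFull s : ℚ) : ℝ) := by
  obtain ⟨v₀, hv₀⟩ := stmt11_general ℓ ε hε
  exact ⟨v₀, fun s hv hs ↦ hv₀ s hv hs _ (namesExhausted_greedyStrat s) _⟩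
end

section
/- Let v ≥ 3, s ≥ 1, s = (s,…,s) a regular v-vector, and m ≤ sv, excluding the case (v,s,m) = (3,1,3). Then the advance bids b = (b₁,…,b_v) with Σbᵢ = m maximizing the winning probability Pr(b,s) are exactly the almost regular vectors, i.e., those with every bᵢ ∈ {⌊m/v⌋, ⌈m/v⌉}. -/
/-!
Write `S = ∑ l, X l` and `F = s * v - m`. Up to a positive constant, the winning probability of `b`
is the coefficient of `∏ k, X k ^ s` in `(∏ k, (S - X k) ^ b k) * S ^ F`: round by round, a factor
lists the card values that do not lose.

Let a bid move from `i` to `j`, where besides this bid `i` is named `e` times more often than `j`.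
As the monomial is invariant under exchanging `i` and `j`, the gain may be symmetrized; twice the
gain is then its coefficient in `(X i - X j) * P * ((S - X i) ^ e - (S - X j) ^ e)` with `P`
symmetric in `X i` and `X j`. The last factor lies in the cone generated by the products of
`X j ^ k - X i ^ k` with a monomial symmetric in `i` and `j`. Multiplication by `P` preserves this
cone, and on its products with `X i - X j` the coefficient is nonnegative, so that balancing never
hurts. The last step to an equitable vector strictly gains, because `P` times the last factor then
contains `M * (X j - X i)` for a symmetric monomial `M` that contributes `2` to the coefficient; the
case `(v, s, m) = (3, 1, 3)` is the one in which this `M` is missing.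
-/

section Domination

variable {R : Type*}

/-- The elements `h` such that multiplication by `h` maps the additive submonoid `C` to itself. -/
def multipliers [Semiring R] (C : AddSubmonoid R) : Subsemiring R where
  carrier := {h | ∀ g ∈ C, h * g ∈ C}
  mul_mem' hx hy g hg := by rw [mul_assoc]; exact hx _ (hy g hg)
  one_mem' g hg := by rwa [one_mul]
  add_mem' hx hy g hg := by rw [add_mul]; exact add_mem (hx g hg) (hy g hg)
  zero_mem' g _ := by rw [zero_mul]; exact zero_mem C

variable [CommRing R] {G : Subsemiring R} {x y z w : R}

/-- The order on `G` whose positive elements are those of `G` itself: `x` is the sum of `y` and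
another element of `G`. Both sides are required to lie in `G` to make it multiplicative. -/
def Dominates (G : Subsemiring R) (x y : R) : Prop := y ∈ G ∧ x - y ∈ G

namespace Dominates

theorem refl (hx : x ∈ G) : Dominates G x x := ⟨hx, by simp⟩

theorem left_mem (h : Dominates G x y) : x ∈ G := by simpa using add_mem h.2 h.1

theorem trans (h : Dominates G x y) (h' : Dominates G y z) : Dominates G x z :=
  ⟨h'.1, by simpa using add_mem h.2 h'.2⟩

theorem mul (h : Dominates G x y) (h' : Dominates G z w) : Dominates G (x * z) (y * w) := by
  refine ⟨mul_mem h.1 h'.1, ?_⟩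
  have : x * z - y * w = x * (z - w) + (x - y) * w := by ring
  exact this ▸ add_mem (mul_mem h.left_mem h'.2) (mul_mem h.2 h'.1)

theorem prod {ι : Type*} {s : Finset ι} {f g : ι → R} (h : ∀ a ∈ s, Dominates G (f a) (g a)) :
    Dominates G (∏ a ∈ s, f a) (∏ a ∈ s, g a) := by
  induction s using Finset.cons_induction with
  | empty => simpa using refl (one_mem G)
  | cons a s ha ih =>
    rw [Finset.prod_cons, Finset.prod_cons]
    exact (h a (Finset.mem_cons_self a s)).mul (ih fun b hb => h b (Finset.mem_cons_of_mem hb))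

theorem pow (h : Dominates G x y) (k : ℕ) : Dominates G (x ^ k) (y ^ k) := by
  simpa using prod (s := Finset.range k) fun _ _ => h

theorem add_right (hx : x ∈ G) (hy : y ∈ G) : Dominates G (x + y) x := ⟨hx, by simpa using hy⟩

theorem add_left (hx : x ∈ G) (hy : y ∈ G) : Dominates G (x + y) y := ⟨hy, by simpa using hx⟩

end Dominates

theorem dominates_sum {ι : Type*} {s : Finset ι} {f : ι → R} (hf : ∀ a ∈ s, f a ∈ G) {a : ι}
    (ha : a ∈ s) : Dominates G (∑ b ∈ s, f b) (f a) := by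
  classical
  rw [← Finset.add_sum_erase s f ha]
  exact .add_right (hf a ha) (sum_mem fun b hb => hf b (Finset.mem_of_mem_erase hb))

theorem dominates_pow_mul_pow {u a p : R} (hu : u ∈ G) (ha : a ∈ G) (hap : Dominates G (a ^ 2) p)
    {c d t m r : ℕ} (hm : m ≤ 2 * c + d) (hr : m + 2 * r = 2 * c + d + t) :
    Dominates G ((u ^ 2 + u * a + p) ^ c * (u + a) ^ d * a ^ t) (u ^ m * p ^ r) := by
  have hu2 : u ^ 2 ∈ G := pow_mem hu 2
  have hua : u * a ∈ G := mul_mem hu ha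
  have hp : p ∈ G := hap.1
  have hTu : Dominates G (u ^ 2 + u * a + p) (u ^ 2) :=
    (Dominates.add_right (add_mem hu2 hua) hp).trans (.add_right hu2 hua)
  have hTua : Dominates G (u ^ 2 + u * a + p) (u * a) :=
    (Dominates.add_right (add_mem hu2 hua) hp).trans (.add_left hu2 hua)
  have hTp : Dominates G (u ^ 2 + u * a + p) p := .add_left (add_mem hu2 hua) hp
  have hat : Dominates G (a ^ t) (a ^ t) := .refl (pow_mem ha t)
  rcases le_total m (2 * c) with hmc | hmc
  · obtain ⟨n, ε, hε, rfl⟩ : ∃ n ε, ε < 2 ∧ m = 2 * n + ε :=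
      ⟨m / 2, m % 2, Nat.mod_lt _ two_pos, (Nat.div_add_mod m 2).symm⟩
    obtain ⟨k, rfl⟩ : ∃ k, c = n + ε + k := Nat.exists_eq_add_of_le (by omega)
    obtain ⟨q, rfl⟩ : ∃ q, r = k + q := Nat.exists_eq_add_of_le (by omega)
    have hq : ε + d + t = 2 * q := by omega
    have hchoice := (((hTu.pow n).mul (hTua.pow ε)).mul (hTp.pow k)).mul
      (((Dominates.add_left hu ha).pow d).mul hat)
    have hcollect : (u ^ 2) ^ n * (u * a) ^ ε * p ^ k * (a ^ d * a ^ t) =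
        u ^ (2 * n + ε) * p ^ k * (a ^ 2) ^ q := by
      rw [← pow_mul a, ← hq]; ring
    have hap' : Dominates G (u ^ (2 * n + ε) * p ^ k * (a ^ 2) ^ q)
        (u ^ (2 * n + ε) * p ^ k * p ^ q) :=
      .mul (.refl (mul_mem (pow_mem hu _) (pow_mem hp k))) (hap.pow q)
    rw [hcollect] at hchoice
    convert hchoice.trans hap' using 1 <;> ring
  · obtain ⟨k, rfl⟩ := Nat.exists_eq_add_of_le hmc
    obtain ⟨e, rfl⟩ := Nat.exists_eq_add_of_le (by omega : k ≤ d)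
    have hr' : e + t = 2 * r := by omega
    have hchoice := (hTu.pow c).mul
      ((((Dominates.add_right hu ha).pow k).mul ((Dominates.add_left hu ha).pow e)).mul hat)
    have hcollect : (u ^ 2) ^ c * (u ^ k * a ^ e * a ^ t) = u ^ (2 * c + k) * (a ^ 2) ^ r := by
      rw [← pow_mul a, ← hr']; ring
    rw [hcollect] at hchoice
    convert hchoice.trans (.mul (.refl (pow_mem hu _)) (hap.pow r)) using 1
    ring

theorem dominates_prod_pow {ι : Type*} {O : Finset ι} (hO : O.Nontrivial) {x y : ι → R} {U : R}
    (hyx : ∀ l ∈ O, ∀ k ∈ O, k ≠ l → Dominates G (y l) (x k))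
    (hUx : ∀ k ∈ O, Dominates G U (x k)) {s : ℕ} {c : ι → ℕ} (hc : ∀ l ∈ O, c l ≤ s) :
    Dominates G (U ^ (∑ l ∈ O, (s - c l)) * ∏ l ∈ O, y l ^ c l) (∏ l ∈ O, x l ^ s) := by
  classical
  obtain ⟨f, hf, -⟩ := O.countable_toSet.exists_cycleOn
  have hfO : ∀ l ∈ O, f l ∈ O := fun l hl => hf.1.mapsTo hl
  have hprod : ∏ l ∈ O, x l ^ s = ∏ l ∈ O, x (f l) ^ (s - c l) * x (f l) ^ c l := by
    simp_rw [← pow_add]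
    refine (Finset.prod_nbij f hfO hf.1.injOn hf.1.surjOn fun l hl => ?_).symm
    rw [Nat.sub_add_cancel (hc l hl)]
  rw [hprod, ← Finset.prod_pow_eq_pow_sum, ← Finset.prod_mul_distrib]
  exact .prod fun l hl => ((hUx _ (hfO l hl)).pow _).mul
    ((hyx l hl _ (hfO l hl) (hf.apply_ne hO hl)).pow _)

end Domination

section AlternatingCone

open MvPolynomial

variable {σ : Type*} {i j : σ}

/-- The cone of nonnegative integer combinations of `X ^ μ * (X j ^ k - X i ^ k)` with `μ i = μ j`.
Its elements are antisymmetric under exchanging `i` and `j`. -/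
noncomputable def alternatingCone (i j : σ) : AddSubmonoid (MvPolynomial σ ℤ) :=
  AddSubmonoid.closure
    {g | ∃ (μ : σ →₀ ℕ) (k : ℕ), μ i = μ j ∧ g = monomial μ 1 * (X j ^ k - X i ^ k)}

theorem monomial_mul_mem_alternatingCone {μ : σ →₀ ℕ} (hμ : μ i = μ j) (k : ℕ) :
    monomial μ 1 * (X j ^ k - X i ^ k) ∈ alternatingCone i j :=
  AddSubmonoid.subset_closure ⟨μ, k, hμ, rfl⟩

theorem X_pow_sub_X_pow_mem_alternatingCone (k : ℕ) :
    (X j ^ k - X i ^ k : MvPolynomial σ ℤ) ∈ alternatingCone i j := by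
  simpa using monomial_mul_mem_alternatingCone (i := i) (j := j) (μ := 0) rfl k

theorem monomial_mem_multipliers {μ : σ →₀ ℕ} (hμ : μ i = μ j) :
    monomial μ 1 ∈ multipliers (alternatingCone i j) := by
  intro g hg
  induction hg using AddSubmonoid.closure_induction with
  | mem g hg =>
    obtain ⟨ν, k, hν, rfl⟩ := hg
    rw [← mul_assoc, monomial_mul, one_mul]
    exact monomial_mul_mem_alternatingCone (by simp [hμ, hν]) k
  | zero => rw [mul_zero]; exact zero_mem _
  | add g g' _ _ hg hg' => rw [mul_add]; exact add_mem hg hg'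

theorem X_mem_multipliers {l : σ} (hi : l ≠ i) (hj : l ≠ j) :
    X l ∈ multipliers (alternatingCone i j) :=
  monomial_mem_multipliers (by simp [hi, hj])

theorem X_mul_X_mem_multipliers (hij : i ≠ j) : X i * X j ∈ multipliers (alternatingCone i j) := by
  have h := monomial_mem_multipliers (i := i) (j := j)
    (μ := Finsupp.single i 1 + Finsupp.single j 1) (by simp [hij, hij.symm])
  rwa [← one_mul (1 : ℤ), ← monomial_mul] at h

theorem mem_multipliers_of_mul_X_pow_sub_X_pow_mem {h : MvPolynomial σ ℤ}
    (hh : ∀ k, h * (X j ^ k - X i ^ k) ∈ alternatingCone i j) :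
    h ∈ multipliers (alternatingCone i j) := by
  intro g hg
  induction hg using AddSubmonoid.closure_induction with
  | mem g hg =>
    obtain ⟨μ, k, hμ, rfl⟩ := hg
    rw [mul_left_comm]
    exact monomial_mem_multipliers hμ _ (hh k)
  | zero => rw [mul_zero]; exact zero_mem _
  | add g g' _ _ hg hg' => rw [mul_add]; exact add_mem hg hg'

theorem X_add_X_mem_multipliers (hij : i ≠ j) : X i + X j ∈ multipliers (alternatingCone i j) := by
  refine mem_multipliers_of_mul_X_pow_sub_X_pow_mem fun k => ?_
  cases k with
  | zero => simp
  | succ k =>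
    have hsplit : ((X i + X j) * (X j ^ (k + 1) - X i ^ (k + 1)) : MvPolynomial σ ℤ) =
        (X j ^ (k + 2) - X i ^ (k + 2)) + X i * X j * (X j ^ k - X i ^ k) := by ring
    rw [hsplit]
    exact add_mem (X_pow_sub_X_pow_mem_alternatingCone _)
      (X_mul_X_mem_multipliers hij _ (X_pow_sub_X_pow_mem_alternatingCone k))

theorem dominates_X_add_X_sq (hij : i ≠ j) :
    Dominates (multipliers (alternatingCone i j)) ((X i + X j) ^ 2) (X i * X j) := by
  have hP := X_mul_X_mem_multipliers hij
  refine ⟨hP, mem_multipliers_of_mul_X_pow_sub_X_pow_mem fun k => ?_⟩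
  have hD (k : ℕ) : (X j ^ k - X i ^ k : MvPolynomial σ ℤ) ∈ alternatingCone i j :=
    X_pow_sub_X_pow_mem_alternatingCone k
  match k with
  | 0 => simp
  | 1 => convert hD 3 using 1; ring
  | k + 2 =>
    convert add_mem (add_mem (hD (k + 4)) (hP _ (hD (k + 2)))) (hP _ (hP _ (hD k))) using 1
    ring

theorem add_X_pow_sub_add_X_pow_mem_alternatingCone {u : MvPolynomial σ ℤ}
    (hu : u ∈ multipliers (alternatingCone i j)) (e : ℕ) :
    (u + X j) ^ e - (u + X i) ^ e ∈ alternatingCone i j := by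
  have hexpand : (u + X j) ^ e - (u + X i) ^ e =
      ∑ k ∈ Finset.range (e + 1), u ^ k * (e.choose k : MvPolynomial σ ℤ) *
        (X j ^ (e - k) - X i ^ (e - k)) := by
    rw [add_pow, add_pow, ← Finset.sum_sub_distrib]
    exact Finset.sum_congr rfl fun k _ => by ring
  rw [hexpand]
  exact sum_mem fun k _ => mul_mem (pow_mem hu k) (natCast_mem _ _) _
    (X_pow_sub_X_pow_mem_alternatingCone _)

theorem coeff_X_sub_X_mul_monomial_mul [DecidableEq σ] (hij : i ≠ j) {μ n : σ →₀ ℕ}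
    (hμ : μ i = μ j) (hn : n i = n j) (k : ℕ) :
    coeff n ((X i - X j) * (monomial μ 1 * (X j ^ k - X i ^ k)) : MvPolynomial σ ℤ) =
      (if μ + Finsupp.single i 1 + Finsupp.single j k = n then 1 else 0) +
        if μ + Finsupp.single i k + Finsupp.single j 1 = n then 1 else 0 := by
  have hexpand : ((X i - X j) * (monomial μ 1 * (X j ^ k - X i ^ k)) : MvPolynomial σ ℤ) =
      monomial μ 1 * X i ^ 1 * X j ^ k + monomial μ 1 * X i ^ k * X j ^ 1 -
        monomial μ 1 * X i ^ (k + 1) - monomial μ 1 * X j ^ (k + 1) := by ring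
  have hi : μ + Finsupp.single i (k + 1) ≠ n := by
    rintro rfl
    simp [hμ, hij] at hn
  have hj : μ + Finsupp.single j (k + 1) ≠ n := by
    rintro rfl
    simp [hμ, hij.symm] at hn
  rw [hexpand]
  simp only [X_pow_eq_monomial, monomial_mul, one_mul, coeff_sub, coeff_add, coeff_monomial,
    if_neg hi, if_neg hj, sub_zero]

theorem coeff_X_sub_X_mul_nonneg {g : MvPolynomial σ ℤ} (hg : g ∈ alternatingCone i j)
    {n : σ →₀ ℕ} (hn : n i = n j) : 0 ≤ coeff n ((X i - X j) * g) := by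
  classical
  rcases eq_or_ne i j with rfl | hij
  · simp
  induction hg using AddSubmonoid.closure_induction with
  | mem g hg =>
    obtain ⟨μ, k, hμ, rfl⟩ := hg
    rw [coeff_X_sub_X_mul_monomial_mul hij hμ hn]
    positivity
  | zero => simp
  | add g g' _ _ hg hg' => rw [mul_add, coeff_add]; exact add_nonneg hg hg'

theorem coeff_X_sub_X_mul_pos_of_dominates (hij : i ≠ j) {H : MvPolynomial σ ℤ} {μ : σ →₀ ℕ}
    (hμ : μ i = μ j) (hH : Dominates (multipliers (alternatingCone i j)) H (monomial μ 1)) :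
    0 < coeff (μ + Finsupp.single i 1 + Finsupp.single j 1)
      ((X i - X j) * (H * (X j - X i))) := by
  classical
  set n := μ + Finsupp.single i 1 + Finsupp.single j 1 with hn
  have hnij : n i = n j := by simp [hn, hμ, hij, hij.symm]
  have hmain : coeff n ((X i - X j) * (monomial μ 1 * (X j ^ 1 - X i ^ 1))) = (2 : ℤ) := by
    rw [coeff_X_sub_X_mul_monomial_mul hij hμ hnij, if_pos hn.symm, one_add_one_eq_two]
  have hrest : 0 ≤ coeff n ((X i - X j) * ((H - monomial μ 1) * (X j ^ 1 - X i ^ 1))) :=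
    coeff_X_sub_X_mul_nonneg (hH.2 _ (X_pow_sub_X_pow_mem_alternatingCone 1)) hnij
  rw [sub_mul H, mul_sub (X i - X j), coeff_sub, hmain, pow_one, pow_one] at hrest
  linarith

end AlternatingCone

section BidPoly

open MvPolynomial

theorem coeff_rename_perm {σ : Type*} {p : MvPolynomial σ ℤ} {n : σ →₀ ℕ} {τ : Equiv.Perm σ}
    (hn : ∀ k, n (τ k) = n k) : coeff n (rename τ p) = coeff n p := by
  have hmap : n.mapDomain τ = n := by
    ext k
    rw [Finsupp.mapDomain_equiv_apply, ← hn, Equiv.apply_symm_apply]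
  simpa only [hmap] using coeff_rename_mapDomain τ τ.injective p n

theorem exists_eq_add_single_of_apply_eq_add {σ : Type*} [DecidableEq σ] {i j : σ} (hij : i ≠ j)
    {c : σ → ℕ} {e : ℕ} (hc : c i = c j + e) : ∃ a : σ → ℕ, a i = a j ∧ c = a + Pi.single i e := by
  refine ⟨Function.update c i (c j), by simp [hij.symm], funext fun l => ?_⟩
  rcases eq_or_ne l i with rfl | hl
  · simp [hc]
  · simp [hl]

variable {σ : Type*} [Fintype σ]

/-- The generating polynomial of the deals that survive the bid vector `b` followed by `F` rounds
without a bid: the coefficient of `∏ k, X k ^ n k` counts the words with `n k` letters `k` whose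
letter at each of the `b k` positions bidding `k` differs from `k`. -/
noncomputable def bidPoly (F : ℕ) (b : σ → ℕ) : MvPolynomial σ ℤ :=
  (∏ k, ((∑ l, X l) - X k) ^ b k) * (∑ l, X l) ^ F

theorem bidPoly_succ (F : ℕ) (b : σ → ℕ) :
    bidPoly (F + 1) b = bidPoly F b * ∑ l, X l := by
  rw [bidPoly, bidPoly, pow_succ, mul_assoc]

theorem bidPoly_add_single [DecidableEq σ] (F : ℕ) (b : σ → ℕ) (k : σ) (e : ℕ) :
    bidPoly F (b + Pi.single k e) = bidPoly F b * ((∑ l, X l) - X k) ^ e := by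
  have hsingle : ∏ l, ((∑ l, X l) - X l : MvPolynomial σ ℤ) ^ (Pi.single k e : σ → ℕ) l =
      ((∑ l, X l) - X k) ^ e := by
    rw [Finset.prod_eq_single k (fun l _ hl => by rw [Pi.single_eq_of_ne hl, pow_zero]) (by simp),
      Pi.single_eq_same]
  simp only [bidPoly, Pi.add_apply, pow_add, Finset.prod_mul_distrib, hsingle]
  ring

theorem rename_bidPoly (F : ℕ) (b : σ → ℕ) (τ : Equiv.Perm σ) :
    rename τ (bidPoly F b) = bidPoly F (b ∘ τ.symm) := by
  have hsum : ∑ l, X (τ l) = (∑ l, X l : MvPolynomial σ ℤ) := Equiv.sum_comp τ X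
  simp only [bidPoly, map_mul, map_prod, map_pow, map_sub, map_sum, rename_X, hsum]
  congr 1
  refine Fintype.prod_equiv τ _ _ fun k => ?_
  rw [Function.comp_apply, Equiv.symm_apply_apply]

theorem coeff_bidPoly_comp_perm {n : σ →₀ ℕ} {τ : Equiv.Perm σ} (hn : ∀ k, n (τ k) = n k) (F : ℕ)
    (b : σ → ℕ) : coeff n (bidPoly F (b ∘ τ)) = coeff n (bidPoly F b) := by
  rw [← coeff_rename_perm hn, rename_bidPoly, Function.comp_assoc, Equiv.self_comp_symm,
    Function.comp_id]

variable [DecidableEq σ] {i j : σ}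

-- The left-hand difference is the coefficient of `D := bidPoly F a * (S - X i) ^ e * (X i - X j)`,
-- which the exchange of `i` and `j` does not change; the right-hand polynomial is the sum of `D`
-- and its image under this exchange.
theorem two_mul_coeff_bidPoly_sub {n : σ →₀ ℕ} (hn : n i = n j) {a : σ → ℕ} (ha : a i = a j)
    (F e : ℕ) :
    2 * (coeff n (bidPoly F (a + Pi.single i e + Pi.single j 1)) -
        coeff n (bidPoly F (a + Pi.single i e + Pi.single i 1))) =
      coeff n ((X i - X j) *
        (bidPoly F a * (((∑ l, X l) - X i) ^ e - ((∑ l, X l) - X j) ^ e))) := by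
  set D := bidPoly F a * ((∑ l, X l) - X i) ^ e * (X i - X j) with hD
  have hdiff : bidPoly F (a + Pi.single i e + Pi.single j 1) -
      bidPoly F (a + Pi.single i e + Pi.single i 1) = D := by
    simp only [bidPoly_add_single, hD]
    ring
  have hswap : rename (Equiv.swap i j) D =
      bidPoly F a * ((∑ l, X l) - X j) ^ e * (X j - X i) := by
    have hsum : ∑ l, X (Equiv.swap i j l) = (∑ l, X l : MvPolynomial σ ℤ) :=
      Equiv.sum_comp (Equiv.swap i j) X
    have ha' : a ∘ Equiv.swap i j = a := funext (Equiv.apply_swap_eq_self ha)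
    simp [hD, rename_bidPoly, hsum, ha']
  have hsymm : coeff n (rename (Equiv.swap i j) D) = coeff n D :=
    coeff_rename_perm (Equiv.apply_swap_eq_self hn)
  rw [← coeff_sub, hdiff, two_mul]
  nth_rewrite 2 [← hsymm]
  rw [← coeff_add, hswap, hD]
  congr 1
  ring

theorem sum_X_eq_sum_compl_pair_add (hij : i ≠ j) :
    (∑ l, X l : MvPolynomial σ ℤ) = ∑ l ∈ {i, j}ᶜ, X l + (X i + X j) := by
  rw [← Finset.sum_compl_add_sum {i, j}, Finset.sum_pair hij]

theorem sum_X_sub_X_eq (hij : i ≠ j) {l : σ} (hl : l ∈ ({i, j}ᶜ : Finset σ)) :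
    (∑ k, X k) - X l =
      ∑ k ∈ ({i, j}ᶜ : Finset σ).erase l, X k + (X i + X j : MvPolynomial σ ℤ) := by
  rw [sum_X_eq_sum_compl_pair_add hij, ← Finset.sum_erase_add _ _ hl]
  ring

theorem bidPoly_eq_of_apply_eq (hij : i ≠ j) {a : σ → ℕ} (ha : a i = a j) (F : ℕ) :
    bidPoly F a =
      ((∑ l ∈ {i, j}ᶜ, X l) ^ 2 + (∑ l ∈ {i, j}ᶜ, X l) * (X i + X j) + X i * X j) ^ a i *
        (∑ l ∈ {i, j}ᶜ, X l + (X i + X j)) ^ F *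
        ∏ l ∈ {i, j}ᶜ, ((∑ k, X k) - X l) ^ a l := by
  rw [bidPoly, ← Finset.prod_compl_mul_prod {i, j}, Finset.prod_pair hij, ← ha, ← mul_pow,
    sum_X_eq_sum_compl_pair_add hij]
  ring

theorem mem_compl_pair {l : σ} : l ∈ ({i, j}ᶜ : Finset σ) ↔ l ≠ i ∧ l ≠ j := by
  simp only [Finset.mem_compl, Finset.mem_insert, Finset.mem_singleton, not_or, ne_eq]

theorem X_mem_multipliers_of_mem_compl {l : σ} (hl : l ∈ ({i, j}ᶜ : Finset σ)) :
    X l ∈ multipliers (alternatingCone i j) := by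
  rw [mem_compl_pair] at hl
  exact X_mem_multipliers hl.1 hl.2

theorem sum_X_mem_multipliers {O : Finset σ} (hO : O ⊆ {i, j}ᶜ) :
    ∑ l ∈ O, X l ∈ multipliers (alternatingCone i j) :=
  sum_mem fun _ hl => X_mem_multipliers_of_mem_compl (hO hl)

theorem sum_X_sub_X_mem_multipliers (hij : i ≠ j) {l : σ} (hl : l ∈ ({i, j}ᶜ : Finset σ)) :
    (∑ k, X k) - X l ∈ multipliers (alternatingCone i j) := by
  rw [sum_X_sub_X_eq hij hl]
  exact add_mem (sum_X_mem_multipliers (Finset.erase_subset _ _)) (X_add_X_mem_multipliers hij)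

omit [DecidableEq σ] in
theorem bidPoly_mem_multipliers (hij : i ≠ j) {a : σ → ℕ} (ha : a i = a j) (F : ℕ) :
    bidPoly F a ∈ multipliers (alternatingCone i j) := by
  classical
  have hu := sum_X_mem_multipliers (Finset.Subset.refl ({i, j}ᶜ : Finset σ))
  have hpair := X_add_X_mem_multipliers hij
  rw [bidPoly_eq_of_apply_eq hij ha]
  exact mul_mem (mul_mem (pow_mem (add_mem (add_mem (pow_mem hu 2) (mul_mem hu hpair))
    (X_mul_X_mem_multipliers hij)) _) (pow_mem (add_mem hu hpair) _))
    (prod_mem fun l hl => pow_mem (sum_X_sub_X_mem_multipliers hij hl) _)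

theorem dominates_sum_X_sub_X (hij : i ≠ j) {l k : σ} (hl : l ∈ ({i, j}ᶜ : Finset σ))
    (hk : k ∈ ({i, j}ᶜ : Finset σ)) (hkl : k ≠ l) :
    Dominates (multipliers (alternatingCone i j)) ((∑ k, X k) - X l) (X k) := by
  rw [sum_X_sub_X_eq hij hl]
  exact (Dominates.add_right (sum_X_mem_multipliers (Finset.erase_subset _ _))
    (X_add_X_mem_multipliers hij)).trans (dominates_sum
      (fun m hm => X_mem_multipliers_of_mem_compl (Finset.mem_of_mem_erase hm))
      (Finset.mem_erase.2 ⟨hkl, hk⟩))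

theorem coeff_bidPoly_add_single_le {n : σ →₀ ℕ} (hn : n i = n j) {c : σ → ℕ} (hc : c j ≤ c i)
    (F : ℕ) :
    coeff n (bidPoly F (c + Pi.single i 1)) ≤ coeff n (bidPoly F (c + Pi.single j 1)) := by
  rcases eq_or_ne i j with rfl | hij
  · rfl
  obtain ⟨e, he⟩ := Nat.exists_eq_add_of_le hc
  obtain ⟨a, ha, rfl⟩ := exists_eq_add_single_of_apply_eq_add hij he
  have hpow : ((∑ l, X l) - X i) ^ e - ((∑ l, X l) - X j) ^ e ∈ alternatingCone i j := by
    have hu := sum_X_mem_multipliers (Finset.Subset.refl ({i, j}ᶜ : Finset σ))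
    convert add_X_pow_sub_add_X_pow_mem_alternatingCone hu e using 3 <;>
      rw [sum_X_eq_sum_compl_pair_add hij] <;> ring
  have hnonneg := coeff_X_sub_X_mul_nonneg (bidPoly_mem_multipliers hij ha F _ hpow) hn
  rw [← two_mul_coeff_bidPoly_sub hn ha] at hnonneg
  linarith

theorem bidPoly_dominates_of_compl_pair_eq_singleton (hij : i ≠ j) {k : σ}
    (hk : ({i, j}ᶜ : Finset σ) = {k}) {a : σ → ℕ} (ha : a i = a j) {F m r : ℕ}
    (hm : m ≤ 2 * a i + F) (hr : m + 2 * r = 2 * a i + F + a k) :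
    Dominates (multipliers (alternatingCone i j)) (bidPoly F a) (X k ^ m * (X i * X j) ^ r) := by
  have hXk : X k ∈ multipliers (alternatingCone i j) :=
    X_mem_multipliers_of_mem_compl (by simp [hk])
  rw [bidPoly_eq_of_apply_eq hij ha, hk, Finset.sum_singleton, Finset.prod_singleton,
    sum_X_eq_sum_compl_pair_add hij, hk, Finset.sum_singleton, add_sub_cancel_left]
  exact dominates_pow_mul_pow hXk (X_add_X_mem_multipliers hij) (dominates_X_add_X_sq hij) hm hr

theorem bidPoly_dominates_of_compl_pair_nontrivial (hij : i ≠ j)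
    (hO : ({i, j}ᶜ : Finset σ).Nontrivial) {a : σ → ℕ} (ha : a i = a j) {F s r : ℕ}
    (hle : ∀ l ∈ ({i, j}ᶜ : Finset σ), a l ≤ s)
    (hr : ∑ l ∈ {i, j}ᶜ, (s - a l) + 2 * r = 2 * a i + F) :
    Dominates (multipliers (alternatingCone i j)) (bidPoly F a)
      ((∏ l ∈ {i, j}ᶜ, X l ^ s) * (X i * X j) ^ r) := by
  set u : MvPolynomial σ ℤ := ∑ l ∈ {i, j}ᶜ, X l
  set m := ∑ l ∈ {i, j}ᶜ, (s - a l)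
  have hX : ∀ l ∈ ({i, j}ᶜ : Finset σ), X l ∈ multipliers (alternatingCone i j) := fun _ =>
    X_mem_multipliers_of_mem_compl
  have hpair : Dominates (multipliers (alternatingCone i j))
      ((u ^ 2 + u * (X i + X j) + X i * X j) ^ a i * (u + (X i + X j)) ^ F)
      (u ^ m * (X i * X j) ^ r) := by
    have hm : m ≤ 2 * a i + F := by omega
    have h := dominates_pow_mul_pow (u := u) (t := 0) (sum_mem hX) (X_add_X_mem_multipliers hij)
      (dominates_X_add_X_sq hij) hm hr
    rwa [pow_zero, mul_one] at h
  have hothers : Dominates (multipliers (alternatingCone i j))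
      (u ^ m * ∏ l ∈ {i, j}ᶜ, ((∑ k, X k) - X l) ^ a l) (∏ l ∈ {i, j}ᶜ, X l ^ s) :=
    dominates_prod_pow (x := X) (y := fun l => (∑ k, X k) - X l) (U := u) hO
      (fun l hl k hk hkl => dominates_sum_X_sub_X hij hl hk hkl) (fun k hk => dominates_sum hX hk)
      hle
  have hmem : ∏ l ∈ {i, j}ᶜ, ((∑ k, X k) - X l) ^ a l ∈ multipliers (alternatingCone i j) :=
    prod_mem fun l hl => pow_mem (sum_X_sub_X_mem_multipliers hij hl) _
  have hP : (X i * X j) ^ r ∈ multipliers (alternatingCone i j) :=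
    pow_mem (X_mul_X_mem_multipliers hij) r
  rw [bidPoly_eq_of_apply_eq hij ha]
  refine (hpair.mul (.refl hmem)).trans ?_
  rw [mul_right_comm]
  exact hothers.mul (.refl hP)

theorem monomial_eq_prod_compl_pair_mul (hij : i ≠ j) {μ : σ →₀ ℕ} {s r : ℕ} (hi : μ i = r)
    (hj : μ j = r) (hμ : ∀ l ∈ ({i, j}ᶜ : Finset σ), μ l = s) :
    monomial μ (1 : ℤ) = (∏ l ∈ {i, j}ᶜ, X l ^ s) * (X i * X j) ^ r := by
  rw [monomial_eq, C_1, one_mul, Finsupp.prod_fintype _ _ fun _ => pow_zero _,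
    ← Finset.prod_compl_mul_prod {i, j}, Finset.prod_pair hij, hi, hj, mul_pow]
  congr 1
  exact Finset.prod_congr rfl fun l hl => by rw [hμ l hl]

theorem bidPoly_dominates_monomial (hij : i ≠ j) (hcard : 3 ≤ Fintype.card σ) {μ : σ →₀ ℕ}
    {s : ℕ} (hi : μ i + 1 = s) (hj : μ j + 1 = s) (hμ : ∀ l ∈ ({i, j}ᶜ : Finset σ), μ l = s)
    {a : σ → ℕ} (ha : a i = a j) {F : ℕ} (hsum : ∑ l, a l + F + 2 = s * Fintype.card σ)
    (hle : ∀ l ∈ ({i, j}ᶜ : Finset σ), a l ≤ s)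
    (hle₃ : Fintype.card σ = 3 → ∀ l ∈ ({i, j}ᶜ : Finset σ), a l + 2 ≤ 2 * s) :
    Dominates (multipliers (alternatingCone i j)) (bidPoly F a) (monomial μ 1) := by
  have hO : ({i, j}ᶜ : Finset σ).card + 2 = Fintype.card σ := by
    rw [← Finset.card_pair hij, Finset.card_compl_add_card]
  rw [monomial_eq_prod_compl_pair_mul hij rfl (by omega) hμ]
  rw [← Finset.sum_compl_add_sum {i, j}, Finset.sum_pair hij, ← ha, ← hO, mul_add] at hsum
  rcases hcard.eq_or_lt with hcard | hcard
  · obtain ⟨k, hk⟩ := Finset.card_eq_one.1 (by omega : ({i, j}ᶜ : Finset σ).card = 1)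
    have hlek := hle₃ hcard.symm k (by simp [hk])
    rw [hk, Finset.sum_singleton, Finset.card_singleton] at hsum
    rw [hk, Finset.prod_singleton]
    exact bidPoly_dominates_of_compl_pair_eq_singleton hij hk ha (by omega) (by omega)
  · have hnontrivial : ({i, j}ᶜ : Finset σ).Nontrivial :=
      Finset.one_lt_card_iff_nontrivial.1 (by omega)
    have hdeficit : ∑ l ∈ {i, j}ᶜ, (s - a l) + ∑ l ∈ {i, j}ᶜ, a l =
        s * ({i, j}ᶜ : Finset σ).card := by
      rw [← Finset.sum_add_distrib, Finset.sum_congr rfl fun l hl => Nat.sub_add_cancel (hle l hl),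
        Finset.sum_const, smul_eq_mul, mul_comm]
    exact bidPoly_dominates_of_compl_pair_nontrivial hij hnontrivial ha hle (by omega)

omit [DecidableEq σ] in
theorem exists_dominates_bidPoly_and_mul_eq (hij : i ≠ j) {a : σ → ℕ} (ha : a i = a j) (F : ℕ)
    {e : ℕ} (he : e ≤ 1) :
    ∃ H, Dominates (multipliers (alternatingCone i j)) H (bidPoly (F + e) a) ∧
      bidPoly F a * (((∑ l, X l) - X i) ^ (e + 1) - ((∑ l, X l) - X j) ^ (e + 1)) =
        H * (X j - X i) := by
  classical
  have hmem := bidPoly_mem_multipliers hij ha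
  interval_cases e
  · exact ⟨bidPoly F a, .refl (hmem F), by ring⟩
  · have hu := sum_X_mem_multipliers (Finset.Subset.refl ({i, j}ᶜ : Finset σ))
    refine ⟨bidPoly (F + 1) a + bidPoly F a * ∑ l ∈ {i, j}ᶜ, X l,
      .add_right (hmem (F + 1)) (mul_mem (hmem F) hu), ?_⟩
    rw [bidPoly_succ, sum_X_eq_sum_compl_pair_add hij]
    ring

theorem coeff_bidPoly_add_single_lt (hcard : 3 ≤ Fintype.card σ) {n : σ →₀ ℕ} {s : ℕ}
    (hn : ∀ l, n l = s) {c : σ → ℕ} (hji : c j < c i) (hij : c i ≤ c j + 2) {F : ℕ}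
    (hsum : ∑ l, c l + 1 + F = s * Fintype.card σ) (hle : ∀ l ∈ ({i, j}ᶜ : Finset σ), c l ≤ s)
    (hle₃ : Fintype.card σ = 3 → ∀ l ∈ ({i, j}ᶜ : Finset σ), c l + 2 ≤ 2 * s) :
    coeff n (bidPoly F (c + Pi.single i 1)) < coeff n (bidPoly F (c + Pi.single j 1)) := by
  have hne : i ≠ j := by rintro rfl; exact hji.false
  obtain ⟨e, he⟩ : ∃ e, c i = c j + (e + 1) := ⟨c i - c j - 1, by omega⟩
  obtain ⟨a, ha, hca⟩ := exists_eq_add_single_of_apply_eq_add hne he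
  have hac : ∀ l ∈ ({i, j}ᶜ : Finset σ), c l = a l := fun l hl => by
    rw [hca, Pi.add_apply, Pi.single_eq_of_ne (mem_compl_pair.1 hl).1, add_zero]
  have hsum' : ∑ l, a l + (F + e) + 2 = s * Fintype.card σ := by
    simp only [← hsum, hca, Pi.add_apply, Finset.sum_add_distrib, Finset.sum_pi_single',
      Finset.mem_univ, if_true]
    omega
  have hs : s ≠ 0 := by rintro rfl; omega
  have hnj : n j ≠ 0 := by rwa [hn]
  have hni : (n - Finsupp.single j 1 : σ →₀ ℕ) i ≠ 0 := by simpa [hn, hne] using hs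
  obtain ⟨μ, rfl⟩ : ∃ μ, n = μ + Finsupp.single i 1 + Finsupp.single j 1 :=
    ⟨n - Finsupp.single j 1 - Finsupp.single i 1, by
      rw [Finsupp.sub_add_single_one_cancel hni, Finsupp.sub_add_single_one_cancel hnj]⟩
  have hμi : μ i + 1 = s := by simpa [hne] using hn i
  have hμj : μ j + 1 = s := by simpa [hne.symm] using hn j
  have hμO : ∀ l ∈ ({i, j}ᶜ : Finset σ), μ l = s := fun l hl => by
    obtain ⟨hli, hlj⟩ := mem_compl_pair.1 hl
    simpa [hli, hlj] using hn l
  obtain ⟨H, hH, hHeq⟩ := exists_dominates_bidPoly_and_mul_eq hne ha F (by omega : e ≤ 1)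
  have hHμ := hH.trans (bidPoly_dominates_monomial hne hcard hμi hμj hμO ha hsum'
    (fun l hl => hac l hl ▸ hle l hl) (fun h l hl => hac l hl ▸ hle₃ h l hl))
  have hpos := coeff_X_sub_X_mul_pos_of_dominates hne (by omega) hHμ
  rw [← hHeq, ← two_mul_coeff_bidPoly_sub ((hn i).trans (hn j).symm) ha, ← hca] at hpos
  linarith

end BidPoly

section Balancing

open Set (EquitableOn univ)

variable {σ : Type*} [Fintype σ]

theorem equitableOn_univ_iff {b : σ → ℕ} : EquitableOn univ b ↔
    ∀ k, b k = (∑ l, b l) / Fintype.card σ ∨ b k = (∑ l, b l) / Fintype.card σ + 1 := by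
  simpa using Finset.equitableOn_iff (s := Finset.univ) (f := b)

theorem exists_perm_eq_comp_of_equitableOn {b b' : σ → ℕ} (hb : EquitableOn univ b)
    (hb' : EquitableOn univ b') (hsum : ∑ k, b k = ∑ k, b' k) :
    ∃ τ : Equiv.Perm σ, b = b' ∘ τ := by
  classical
  rw [equitableOn_univ_iff] at hb hb'
  rw [← hsum] at hb'
  set q := (∑ k, b k) / Fintype.card σ
  have sum_eq {d : σ → ℕ} (hd : ∀ k, d k = q ∨ d k = q + 1) :
      ∑ k, d k = Fintype.card σ * q + Fintype.card {k // d k = q + 1} := by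
    rw [Finset.sum_congr rfl fun k _ => show d k = q + if d k = q + 1 then 1 else 0 by grind,
      Finset.sum_add_distrib, Fintype.card_subtype, Finset.card_filter]
    simp
  have hcard : Fintype.card {k // b k = q + 1} = Fintype.card {k // b' k = q + 1} := by
    rw [sum_eq hb, sum_eq hb'] at hsum
    exact Nat.add_left_cancel hsum
  set e := Fintype.equivOfCardEq hcard
  refine ⟨e.extendSubtype, funext fun k => ?_⟩
  by_cases hk : b k = q + 1
  · exact hk.trans (e.extendSubtype_mem k hk).symm
  · exact ((hb k).resolve_right hk).trans
      ((hb' _).resolve_right (e.extendSubtype_not_mem k hk)).symm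

variable [DecidableEq σ]

theorem sum_add_single_one (c : σ → ℕ) (k : σ) :
    ∑ l, (c + Pi.single k 1 : σ → ℕ) l = ∑ l, c l + 1 := by
  simp [Finset.sum_add_distrib]

theorem sum_sq_add_single_one (c : σ → ℕ) (k : σ) :
    ∑ l, (c + Pi.single k 1 : σ → ℕ) l ^ 2 = ∑ l, c l ^ 2 + 2 * c k + 1 := by
  have hsq (l : σ) : (c + Pi.single k 1 : σ → ℕ) l ^ 2 =
      c l ^ 2 + (Pi.single k (2 * c k + 1) : σ → ℕ) l := by
    rcases eq_or_ne l k with rfl | hl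
    · simp only [Pi.add_apply, Pi.single_eq_same]
      ring
    · simp [hl]
  simp only [hsq, Finset.sum_add_distrib, Finset.sum_pi_single', Finset.mem_univ, if_true]
  ring

variable {α : Type*} [Preorder α] {f : (σ → ℕ) → α} {m : ℕ}

theorem exists_equitableOn_lt
    (hle : ∀ (c : σ → ℕ) i j, ∑ l, c l + 1 = m → c j < c i →
      f (c + Pi.single i 1) ≤ f (c + Pi.single j 1))
    (hlt : ∀ (c : σ → ℕ) i j, ∑ l, c l + 1 = m → c j < c i →
      EquitableOn univ (c + Pi.single j 1) → f (c + Pi.single i 1) < f (c + Pi.single j 1))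
    {b : σ → ℕ} (hb : ∑ l, b l = m) (hne : ¬EquitableOn univ b) :
    ∃ b' : σ → ℕ, ∑ l, b' l = m ∧ EquitableOn univ b' ∧ f b < f b' := by
  obtain ⟨i, -, j, -, hij⟩ := Set.not_equitableOn.1 hne
  have hji : j ≠ i := by rintro rfl; omega
  obtain ⟨c, rfl⟩ : ∃ c, b = c + Pi.single i 1 := ⟨b - Pi.single i 1,
    funext fun l => by grind [Pi.add_apply, Pi.sub_apply]⟩
  have hcji : c j < c i := by simpa [hji] using hij
  rw [sum_add_single_one] at hb
  have hsum : ∑ l, (c + Pi.single j 1 : σ → ℕ) l = m := (sum_add_single_one c j).trans hb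
  by_cases heq : EquitableOn univ (c + Pi.single j 1)
  · exact ⟨_, hsum, heq, hlt c i j hb hcji heq⟩
  · obtain ⟨b', hb', heq', hlt'⟩ := exists_equitableOn_lt hle hlt hsum heq
    exact ⟨b', hb', heq', (hle c i j hb hcji).trans_lt hlt'⟩
termination_by ∑ l, b l ^ 2
decreasing_by
  subst_vars
  simp only [sum_sq_add_single_one]
  omega

theorem forall_le_iff_equitableOn (hperm : ∀ b (τ : Equiv.Perm σ), f (b ∘ τ) = f b)
    (hle : ∀ (c : σ → ℕ) i j, ∑ l, c l + 1 = m → c j < c i →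
      f (c + Pi.single i 1) ≤ f (c + Pi.single j 1))
    (hlt : ∀ (c : σ → ℕ) i j, ∑ l, c l + 1 = m → c j < c i →
      EquitableOn univ (c + Pi.single j 1) → f (c + Pi.single i 1) < f (c + Pi.single j 1))
    {b : σ → ℕ} (hb : ∑ l, b l = m) :
    (∀ b' : σ → ℕ, ∑ l, b' l = m → f b' ≤ f b) ↔ EquitableOn univ b := by
  constructor
  · intro hmax
    by_contra hne
    obtain ⟨b', hb', -, hbb'⟩ := exists_equitableOn_lt hle hlt hb hne
    exact hbb'.not_ge (hmax b' hb')
  · intro heq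
    have hle_of_equitable (b') (hb' : ∑ l, b' l = m) (heq' : EquitableOn univ b') : f b' ≤ f b := by
      obtain ⟨τ, rfl⟩ := exists_perm_eq_comp_of_equitableOn heq' heq (hb'.trans hb.symm)
      exact (hperm b τ).le
    intro b' hb'
    by_cases heq' : EquitableOn univ b'
    · exact hle_of_equitable b' hb' heq'
    · obtain ⟨b'', hb'', heq'', hlt'⟩ := exists_equitableOn_lt hle hlt hb' heq'
      exact hlt'.le.trans (hle_of_equitable b'' hb'' heq'')

end Balancing

section OptimalBids

open MvPolynomial
open Set (EquitableOn univ)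

variable {σ : Type*} [Fintype σ]

theorem le_of_equitableOn_of_sum_le {b : σ → ℕ} (hb : EquitableOn univ b) {s : ℕ}
    (hsum : ∑ l, b l ≤ s * Fintype.card σ) (k : σ) : b k ≤ s := by
  by_contra! hk
  have hlt : ∑ _l : σ, s < ∑ l, b l :=
    Finset.sum_lt_sum (fun l _ => by have := hb (Set.mem_univ k) (Set.mem_univ l); omega)
      ⟨k, Finset.mem_univ k, hk⟩
  rw [Finset.sum_const, Finset.card_univ, smul_eq_mul, mul_comm] at hlt
  exact hlt.not_ge hsum

theorem coeff_bidPoly_add_single_lt_of_equitableOn [DecidableEq σ] {n : σ →₀ ℕ} {s m F : ℕ}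
    (hcard : 3 ≤ Fintype.card σ) (hs : 1 ≤ s) (hn : ∀ l, n l = s)
    (hmF : m + F = s * Fintype.card σ) (hexc : ¬(Fintype.card σ = 3 ∧ s = 1 ∧ m = 3))
    {c : σ → ℕ} {i j : σ} (hc : ∑ l, c l + 1 = m) (hji : c j < c i)
    (heq : EquitableOn univ (c + Pi.single j 1)) :
    coeff n (bidPoly F (c + Pi.single i 1)) < coeff n (bidPoly F (c + Pi.single j 1)) := by
  have hij : i ≠ j := by rintro rfl; exact hji.false
  have hsum := sum_add_single_one c j
  have hle (l) (hl : l ∈ ({i, j}ᶜ : Finset σ)) : c l ≤ s := by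
    have := le_of_equitableOn_of_sum_le heq (s := s) (by omega) l
    simpa [(mem_compl_pair.1 hl).2] using this
  have hij_le : c i ≤ c j + 1 + 1 := by
    simpa [hij] using heq (Set.mem_univ i) (Set.mem_univ j)
  refine coeff_bidPoly_add_single_lt hcard hn hji hij_le (by omega) hle fun h3 l hl => ?_
  rcases hs.eq_or_lt with rfl | hs
  · have hsplit := Finset.sum_compl_add_sum {i, j} c
    rw [Finset.sum_pair hij] at hsplit
    have hcl := Finset.single_le_sum (f := c) (fun _ _ => Nat.zero_le _) hl
    omega
  · have := hle l hl
    omega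

theorem forall_coeff_bidPoly_le_iff_equitableOn {n : σ →₀ ℕ} {s m F : ℕ}
    (hcard : 3 ≤ Fintype.card σ) (hs : 1 ≤ s) (hn : ∀ l, n l = s)
    (hmF : m + F = s * Fintype.card σ) (hexc : ¬(Fintype.card σ = 3 ∧ s = 1 ∧ m = 3))
    {b : σ → ℕ} (hb : ∑ l, b l = m) :
    (∀ b' : σ → ℕ, ∑ l, b' l = m → coeff n (bidPoly F b') ≤ coeff n (bidPoly F b)) ↔
      EquitableOn univ b := by
  classical
  exact forall_le_iff_equitableOn (f := fun b => coeff n (bidPoly F b))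
    (fun b τ => coeff_bidPoly_comp_perm (fun k => (hn _).trans (hn k).symm) F b)
    (fun _ i j _ hji => coeff_bidPoly_add_single_le ((hn i).trans (hn j).symm) hji.le F)
    (fun _ _ _ hc => coeff_bidPoly_add_single_lt_of_equitableOn hcard hs hn hmF hexc hc) hb

end OptimalBids

section Arrangements

open Equiv (Perm)

theorem exists_ofFn_eq {α : Type*} {N : ℕ} {l : List α} (hl : l.length = N) :
    ∃ g : Fin N → α, List.ofFn g = l :=
  ⟨fun p => l.get (p.cast hl.symm), (List.ofFn_congr hl l.get).symm.trans (List.ofFn_get l)⟩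

theorem perm_finRange_iff_exists_ofFn_eq {N : ℕ} {l : List (Fin N)} :
    l.Perm (List.finRange N) ↔ ∃ τ : Perm (Fin N), List.ofFn τ = l := by
  constructor
  · intro hl
    obtain ⟨g, rfl⟩ := exists_ofFn_eq (hl.length_eq.trans List.length_finRange)
    have hinj : Function.Injective g :=
      List.nodup_ofFn.1 (hl.nodup_iff.2 (List.nodup_finRange N))
    exact ⟨Equiv.ofBijective g (Finite.injective_iff_bijective.1 hinj), rfl⟩
  · rintro ⟨τ, rfl⟩
    rw [List.ofFn_eq_map]
    exact τ.map_finRange_perm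

theorem permutations_finRange_perm (N : ℕ) : (List.finRange N).permutations.Perm
    ((Finset.univ : Finset (Perm (Fin N))).toList.map fun τ : Perm (Fin N) => List.ofFn τ) := by
  have hinj : Function.Injective fun τ : Perm (Fin N) => List.ofFn τ := fun _ _ h =>
    DFunLike.coe_injective (List.ofFn_injective h)
  rw [List.perm_ext_iff_of_nodup (List.nodup_permutations _ (List.nodup_finRange N))
    (Finset.univ.nodup_toList.map hinj)]
  intro l
  simp only [List.mem_permutations, perm_finRange_iff_exists_ofFn_eq, List.mem_map,
    Finset.mem_toList, Finset.mem_univ, true_and]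

theorem countP_permutations_ofFn {α : Type*} {N : ℕ} (f : Fin N → α) (P : List α → Bool) :
    (List.ofFn f).permutations.countP P =
      Finset.card {τ : Perm (Fin N) | P (List.ofFn (f ∘ τ))} := by
  rw [List.ofFn_eq_map, ← List.map_permutations, List.countP_map,
    (permutations_finRange_perm N).countP_eq, List.countP_map, Finset.card_def,
    Finset.filter_val, ← Multiset.countP_eq_card_filter, ← Finset.coe_toList, Multiset.coe_countP]
  simp only [Function.comp_def, List.map_ofFn, Bool.decide_eq_true]

variable {α ι : Type*} [Fintype α] [DecidableEq α] [Fintype ι] [DecidableEq ι]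

open scoped Nat in
theorem card_filter_comp_eq {f w : α → ι}
    (hw : ∀ k, Finset.card {p | w p = k} = Finset.card {p | f p = k}) :
    Finset.card {τ : Perm α | f ∘ τ = w} = ∏ k, (Finset.card {p | f p = k})! := by
  have hcard (k) : Fintype.card {p // w p = k} = Fintype.card {p // f p = k} := by
    simpa only [Fintype.card_subtype] using hw k
  obtain ⟨e, rfl⟩ : ∃ e : Perm α, f ∘ e = w :=
    ⟨Equiv.ofFiberEquiv fun k => Fintype.equivOfCardEq (hcard k),
      funext fun p => Equiv.ofFiberEquiv_map _ p⟩
  rw [Finset.card_equiv (t := {τ : Perm α | f ∘ τ = f}) (Equiv.mulRight e⁻¹) fun τ => ?_,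
    ← Fintype.card_subtype, DomMulAct.stabilizer_card]
  · simp only [Fintype.card_subtype]
  · simp only [Finset.mem_filter_univ, Equiv.coe_mulRight, Perm.coe_mul, ← Function.comp_assoc]
    exact (e.comp_symm_eq _ _).symm

open scoped Nat in
theorem card_filter_comp (f : α → ι) (P : (α → ι) → Prop) [DecidablePred P] :
    Finset.card {τ : Perm α | P (f ∘ τ)} = (∏ k, (Finset.card {p | f p = k})!) *
      Finset.card {w : α → ι | P w ∧
        ∀ k, Finset.card {p | w p = k} = Finset.card {p | f p = k}} := by
  set W : Finset (α → ι) := {w | P w ∧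
    ∀ k, Finset.card {p | w p = k} = Finset.card {p | f p = k}} with hW
  have hmaps : Set.MapsTo (fun τ : Perm α => f ∘ τ)
      ({τ | P (f ∘ τ)} : Finset (Perm α)) W := by
    intro τ hτ
    simp only [Finset.mem_coe, hW, Finset.mem_filter_univ] at hτ ⊢
    exact ⟨hτ, fun k => Finset.card_equiv τ fun p => by simp⟩
  have hfiber (w) (hw : w ∈ W) : Finset.card {τ : Perm α | P (f ∘ τ) ∧ f ∘ τ = w} =
      ∏ k, (Finset.card {p | f p = k})! := by
    rw [hW, Finset.mem_filter_univ] at hw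
    rw [← card_filter_comp_eq hw.2]
    congr 1
    ext τ
    simp only [Finset.mem_filter_univ, and_iff_right_iff_imp]
    rintro rfl
    exact hw.1
  simp only [Finset.card_eq_sum_card_fiberwise hmaps, Finset.filter_filter]
  rw [Finset.sum_const_nat hfiber, mul_comm]

open MvPolynomial in
theorem coeff_prod_sum_X {R : Type*} [CommSemiring R] (A : α → Finset ι) (n : ι →₀ ℕ) :
    coeff n (∏ p, ∑ k ∈ A p, X k : MvPolynomial ι R) =
      Finset.card {w : α → ι | (∀ p, w p ∈ A p) ∧ ∀ k, Finset.card {p | w p = k} = n k} := by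
  have hfilter : ({w : α → ι | (∀ p, w p ∈ A p) ∧ ∀ k, Finset.card {p | w p = k} = n k} :
      Finset (α → ι)) = {w ∈ Fintype.piFinset A | ∀ k, Finset.card {p | w p = k} = n k} := by
    ext w
    simp
  have hcontent (w : α → ι) :
      ∑ p, Finsupp.single (w p) 1 = n ↔ ∀ k, Finset.card {p | w p = k} = n k := by
    simp only [Finsupp.ext_iff, Finsupp.finsetSum_apply, Finset.card_filter, Finsupp.single_apply]
  rw [hfilter, Finset.natCast_card_filter, Finset.prod_univ_sum, coeff_sum]
  simp only [X, ← monomial_sum_one, coeff_monomial, hcontent]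

end Arrangements

section Deck

variable {v : ℕ}

/-- The deck with `c k` cards of value `k`, in the order of `deckList` but with values in `Fin v`:
the entry `k` stands for the card value `k + 1`. -/
def deck (c : Fin v → ℕ) : List (Fin v) :=
  (List.finRange v).flatMap fun k => List.replicate (c k) k

theorem deckList_ofFn (c : Fin v → ℕ) :
    deckList (List.ofFn c) = (deck c).map fun k => k.val + 1 := by
  rw [deckList, deck, List.length_ofFn, ← List.map_coe_finRange_eq_range, List.flatMap_map,
    List.map_flatMap]
  simp

theorem length_deck (c : Fin v → ℕ) : (deck c).length = ∑ k, c k := by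
  rw [deck, List.length_flatMap, Fin.sum_univ_def]
  simp

theorem prod_map_deck {M : Type*} [CommMonoid M] (c : Fin v → ℕ) (h : Fin v → M) :
    ((deck c).map h).prod = ∏ k, h k ^ c k := by
  rw [deck, List.map_flatMap, List.flatMap_def, List.prod_flatten, Fin.prod_univ_def]
  simp [Function.comp_def]

theorem count_deck (c : Fin v → ℕ) (k : Fin v) : (deck c).count k = c k := by
  simp [deck, List.count_flatMap, Function.comp_def, List.count_replicate, ← Fin.sum_univ_def]

theorem card_get_deck_eq (c : Fin v → ℕ) (k : Fin v) :
    Finset.card {p | (deck c).get p = k} = c k := by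
  rw [← count_deck c k]
  exact Fin.card_filter_univ_eq_vector_get_eq_count k ⟨deck c, rfl⟩

/-- The card values that do not lose round `p` against the bid vector `c`: all but the bid, and
all of them once the bids are used up. -/
def survivors (c : Fin v → ℕ) (p : ℕ) : Finset (Fin v) :=
  {k | (deck c)[p]? ≠ some k}

theorem winsAux_iff (bid : ℕ → ℕ) (hist : List ℕ) (m : ℕ) (d : List ℕ) :
    winsAux (fun h => bid h.length) hist m d = true ↔
      ∀ p < m, ∀ card ∈ d[p]?, bid (hist.length + p) ≠ card := by
  induction d generalizing hist m with
  | nil => cases m <;> simp [winsAux]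
  | cons card rest ih =>
    cases m with
    | zero => simp [winsAux]
    | succ m =>
      rw [winsAux, Bool.and_eq_true, ih, Nat.forall_lt_succ_left]
      simp [Nat.add_assoc, Nat.add_comm 1]

theorem winsAux_bidStrat_ofFn_iff {N : ℕ} (c : Fin v → ℕ) (w : Fin N → Fin v) :
    winsAux (bidStrat (List.ofFn c)) [] (List.ofFn c).sum (List.ofFn fun p => (w p).val + 1) = true
      ↔ ∀ p : Fin N, w p ∈ survivors c p := by
  have hbid : bidStrat (List.ofFn c) =
      fun h => ((deck c).map fun k => k.val + 1).getD h.length 0 := by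
    funext h
    rw [bidStrat, deckList_ofFn]
  rw [hbid, winsAux_iff fun p => ((deck c).map fun k => k.val + 1).getD p 0, List.sum_ofFn,
    ← length_deck]
  simp only [List.length_nil, Nat.zero_add, survivors, Finset.mem_filter_univ]
  constructor
  · intro h p hp
    have hlt := (List.getElem?_eq_some_iff.1 hp).1
    exact h p hlt ((w p).val + 1) (by simp) (by simp [hp])
  · intro h p hp card hcard heq
    obtain ⟨hpN, rfl⟩ := List.getElem?_eq_some_iff.1 hcard
    refine h ⟨p, by simpa using hpN⟩ (List.getElem?_eq_some_iff.2 ⟨hp, Fin.ext ?_⟩)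
    simpa [hp] using heq

theorem prod_range_getElem?_elim {α M : Type*} [CommMonoid M] (L : List α) (h : α → M) (a : M)
    (F : ℕ) : ∏ p ∈ Finset.range (L.length + F), L[p]?.elim a h = (L.map h).prod * a ^ F := by
  induction L with
  | nil => simp
  | cons x L ih =>
    rw [List.length_cons, Nat.add_right_comm, Finset.prod_range_succ']
    simp only [List.getElem?_cons_succ, ih, List.getElem?_cons_zero, Option.elim_some,
      List.map_cons, List.prod_cons]
    rw [mul_comm, mul_assoc]

open MvPolynomial

theorem sum_survivors_X (c : Fin v → ℕ) (p : ℕ) :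
    (∑ k ∈ survivors c p, X k : MvPolynomial (Fin v) ℤ) =
      (deck c)[p]?.elim (∑ l, X l) fun k => (∑ l, X l) - X k := by
  rcases h : (deck c)[p]? with _ | k
  · simp [survivors, h]
  · simp [survivors, h, Finset.filter_ne]

theorem prod_sum_survivors_X (c : Fin v → ℕ) (F : ℕ) {N : ℕ} (hN : ∑ k, c k + F = N) :
    (∏ p : Fin N, ∑ k ∈ survivors c p, X k : MvPolynomial (Fin v) ℤ) = bidPoly F c := by
  rw [← Finset.prod_range fun p => (∑ k ∈ survivors c p, X k : MvPolynomial (Fin v) ℤ), ← hN,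
    ← length_deck]
  simp only [sum_survivors_X, prod_range_getElem?_elim, prod_map_deck, bidPoly]

open scoped Nat

theorem countP_winsAux_permutations_deckList_ofFn (b s : Fin v → ℕ) {F : ℕ}
    (hF : ∑ k, b k + F = ∑ k, s k) :
    ((deckList (List.ofFn s)).permutations.countP
        (winsAux (bidStrat (List.ofFn b)) [] (List.ofFn b).sum) : ℤ) =
      (∏ k, (s k)! : ℕ) * coeff (Finsupp.equivFunOnFinite.symm s) (bidPoly F b) := by
  have hdeck : deckList (List.ofFn s) = List.ofFn fun p => ((deck s).get p).val + 1 := by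
    rw [deckList_ofFn]
    conv_lhs => rw [← List.ofFn_get (deck s), List.map_ofFn]
    rfl
  have hwins (τ : Equiv.Perm (Fin (deck s).length)) :
      winsAux (bidStrat (List.ofFn b)) [] (List.ofFn b).sum
          (List.ofFn ((fun p => ((deck s).get p).val + 1) ∘ τ)) = true ↔
        ∀ p : Fin (deck s).length, ((deck s).get ∘ τ) p ∈ survivors b p :=
    winsAux_bidStrat_ofFn_iff b ((deck s).get ∘ τ)
  rw [← prod_sum_survivors_X b F (hF.trans (length_deck s).symm), coeff_prod_sum_X]
  simp only [hdeck, countP_permutations_ofFn, hwins, card_get_deck_eq, Nat.cast_mul,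
    card_filter_comp (deck s).get fun w => ∀ p : Fin (deck s).length, w p ∈ survivors b p,
    Finsupp.equivFunOnFinite_symm_apply_apply]

theorem advProb_ofFn (b s : Fin v → ℕ) {F : ℕ} (hF : ∑ k, b k + F = ∑ k, s k) :
    advProb (List.ofFn b) (List.ofFn s) =
      (∏ k, (s k)! : ℕ) / (∑ k, s k)! *
        (coeff (Finsupp.equivFunOnFinite.symm s) (bidPoly F b) : ℤ) := by
  have hlength : (deckList (List.ofFn s)).length = ∑ k, s k := by
    rw [deckList_ofFn, List.length_map, length_deck]
  have hcount := congrArg (Int.cast (R := ℚ)) (countP_winsAux_permutations_deckList_ofFn b s hF)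
  push_cast at hcount
  rw [advProb, winProb, hlength, hcount]
  push_cast
  ring

theorem advProb_ofFn_le_iff {b b' s : Fin v → ℕ} {F : ℕ} (hb : ∑ k, b k + F = ∑ k, s k)
    (hb' : ∑ k, b' k + F = ∑ k, s k) :
    advProb (List.ofFn b') (List.ofFn s) ≤ advProb (List.ofFn b) (List.ofFn s) ↔
      coeff (Finsupp.equivFunOnFinite.symm s) (bidPoly F b') ≤
        coeff (Finsupp.equivFunOnFinite.symm s) (bidPoly F b) := by
  have hpos : (0 : ℚ) < (∏ k, (s k)! : ℕ) / (∑ k, s k)! :=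
    div_pos (Nat.cast_pos.2 (Finset.prod_pos fun k _ => (s k).factorial_pos))
      (Nat.cast_pos.2 (Nat.factorial_pos _))
  rw [advProb_ofFn b s hb, advProb_ofFn b' s hb', mul_le_mul_iff_of_pos_left hpos, Int.cast_le]

end Deck

/-- For a regular deck (`v ≥ 3` values with `s` cards each), excluding the case
`(v,s,m) = (3,1,3)`, the optimal advance bids of total size `m` are exactly the
almost regular ones: every entry is `⌊m/v⌋` or `⌈m/v⌉`. -/
theorem stmt16 (v s m : ℕ) (hv : 3 ≤ v) (hs : 1 ≤ s) (hm : m ≤ s * v)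
    (hexc : ¬(v = 3 ∧ s = 1 ∧ m = 3)) (b : List ℕ)
    (hbl : b.length = v) (hbs : b.sum = m) :
    (∀ b' : List ℕ, b'.length = v → b'.sum = m →
        advProb b' (List.replicate v s) ≤ advProb b (List.replicate v s)) ↔
      ∀ x ∈ b, x = m / v ∨ x = m / v + 1 := by
  obtain ⟨F, hF⟩ := Nat.exists_eq_add_of_le hm
  obtain ⟨c, rfl⟩ := exists_ofFn_eq hbl
  rw [List.sum_ofFn] at hbs
  have hsum {a : Fin v → ℕ} (ha : ∑ k, a k = m) : ∑ k, a k + F = ∑ _k : Fin v, s := by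
    rw [ha, ← hF, Fin.sum_const, smul_eq_mul, mul_comm]
  have hoptimal := forall_coeff_bidPoly_le_iff_equitableOn (σ := Fin v)
    (n := Finsupp.equivFunOnFinite.symm fun _ => s) (by simpa using hv) hs (fun _ => rfl)
    (by simpa using hF.symm) (by simpa using hexc) hbs
  rw [equitableOn_univ_iff, hbs, Fintype.card_fin] at hoptimal
  rw [List.forall_mem_ofFn_iff, ← hoptimal, ← List.ofFn_const]
  constructor
  · intro hmax a ha
    exact (advProb_ofFn_le_iff (hsum hbs) (hsum ha)).1
      (hmax (List.ofFn a) List.length_ofFn (List.sum_ofFn.trans ha))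
  · intro hmax b' hlength hb'
    obtain ⟨a, rfl⟩ := exists_ofFn_eq hlength
    rw [List.sum_ofFn] at hb'
    exact (advProb_ofFn_le_iff (hsum hbs) (hsum hb')).2 (hmax a hb')
end
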